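/- arXiv:2205.05947 — 2 statements merged into one kernel-verified Lean document; each statement's English description precedes it below -/
import Mathlib

section
/- For every γ with 0 < γ < 1/2 there exists M ∈ ℕ such that every finite graph G contains a spanning subgraph G' with interval thickness θ(G') ≤ M and with e(G) - e(G') ≤ γ·|V(G)|². -/
/-- `c` is an interval edge-coloring of `G`: a proper edge-coloring (adjacent edges get
distinct colors) such that at every vertex the set of incident colors is a set of
consecutive integers. -/
def IsIntervalColoring {V : Type*} (G : SimpleGraph V) (c : Sym2 V → ℤ) : Prop :=
  (∀ e ∈ G.edgeSet, ∀ f ∈ G.edgeSet, e ≠ f → (∃ v, v ∈ e ∧ v ∈ f) → c e ≠ c f) ∧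
  (∀ v : V, ∀ x y z : ℤ, x ≤ y → y ≤ z →
    (∃ e ∈ G.edgeSet, v ∈ e ∧ c e = x) → (∃ e ∈ G.edgeSet, v ∈ e ∧ c e = z) →
    ∃ e ∈ G.edgeSet, v ∈ e ∧ c e = y)

/-- `G` admits an interval edge-coloring. -/
def IntervalColorable {V : Type*} (G : SimpleGraph V) : Prop :=
  ∃ c : Sym2 V → ℤ, IsIntervalColoring G c

/-- The interval thickness of `G` is at most `k`: the edge set of `G` can be partitioned
into `k` classes, each of which spans an interval colorable graph. -/
def IntervalThicknessLE {V : Type*} (G : SimpleGraph V) (k : ℕ) : Prop :=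
  ∃ f : Sym2 V → Fin k,
    ∀ i : Fin k,
      IntervalColorable (SimpleGraph.fromEdgeSet {e | e ∈ G.edgeSet ∧ f e = i})

/-- The density of the pair `(X, Y)` in `G`, as a real number. -/
noncomputable def dens {V : Type*} (G : SimpleGraph V) [DecidableRel G.Adj]
    (X Y : Finset V) : ℝ :=
  (G.edgeDensity X Y : ℝ)

/-- `(X, Y)` is an `ε`-regular pair in `G`:
`|d(X,Y) - d(A,B)| ≤ ε` for all `A ⊆ X`, `B ⊆ Y` with `|A| ≥ ε|X|`, `|B| ≥ ε|Y|`. -/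
def EpsRegular {V : Type*} (G : SimpleGraph V) [DecidableRel G.Adj]
    (ε : ℝ) (X Y : Finset V) : Prop :=
  ∀ A ⊆ X, ∀ B ⊆ Y, ε * X.card ≤ A.card → ε * Y.card ≤ B.card →
    |dens G X Y - dens G A B| ≤ ε



/-- total weight between two finsets -/
def WW {V : Type} (w : V → V → ℝ) (A B : Finset V) : ℝ := ∑ a ∈ A, ∑ b ∈ B, w a b

lemma WW_swap {V : Type} (w : V → V → ℝ) (A B : Finset V) :
    WW w A B = WW (fun a b => w b a) B A := by
  unfold WW; exact Finset.sum_comm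

lemma WW_split_left {V : Type} [DecidableEq V] (w : V → V → ℝ) {X A : Finset V} (h : X ⊆ A)
    (B : Finset V) : WW w A B = WW w (A \ X) B + WW w X B := by
  unfold WW; exact (Finset.sum_sdiff h).symm

lemma WW_split_right {V : Type} [DecidableEq V] (w : V → V → ℝ) {Y B : Finset V} (h : Y ⊆ B)
    (A : Finset V) : WW w A B = WW w A (B \ Y) + WW w A Y := by
  rw [WW_swap, WW_split_left _ h, ← WW_swap w, ← WW_swap w]

lemma avg {V : Type} [DecidableEq V] (g : V → ℝ) (s : ℕ) (hs : 0 < s) : ∀ (t : ℕ) (T : Finset V),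
    T.card = t → s ≤ t →
    ∃ T' ⊆ T, T'.card = s ∧ (s : ℝ) * ∑ v ∈ T, g v ≤ (t : ℝ) * ∑ v ∈ T', g v := by
  intro t
  induction t with
  | zero => intro T h1 h2; omega
  | succ t ih =>
    intro T hT hst
    rcases Nat.eq_or_lt_of_le hst with h | h
    · exact ⟨T, subset_rfl, by omega, by rw [h]⟩
    · have hne : T.Nonempty := by rw [← Finset.card_pos]; omega
      obtain ⟨v, hv, hmin⟩ := T.exists_min_image g hne
      have hc : (T.erase v).card = t := by rw [Finset.card_erase_of_mem hv]; omega
      obtain ⟨T', h1, h2, h3⟩ := ih (T.erase v) hc (by omega)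
      refine ⟨T', h1.trans (Finset.erase_subset _ _), h2, ?_⟩
      have e1 : ∑ x ∈ T, g x = g v + ∑ x ∈ T.erase v, g x := (Finset.add_sum_erase T g hv).symm
      have e2 : (t : ℝ) * g v ≤ ∑ x ∈ T.erase v, g x := by
        rw [← hc, ← nsmul_eq_mul]
        exact Finset.card_nsmul_le_sum _ _ _ (fun x hx => hmin x (Finset.mem_of_mem_erase hx))
      have ht : (0 : ℝ) < t := by exact_mod_cast (by omega : 0 < t)
      rw [e1]
      push_cast
      have hs' : (0 : ℝ) < s := by exact_mod_cast hs
      refine le_of_mul_le_mul_left ?_ ht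
      nlinarith [mul_le_mul_of_nonneg_left e2 hs'.le, mul_le_mul_of_nonneg_left h3 (by positivity : (0:ℝ) ≤ t + 1)]

lemma max_cut {V : Type} [DecidableEq V] (w : V → V → ℝ) (hs : ∀ a b, w a b = w b a)
    (h0 : ∀ a, w a a = 0) (S : Finset V) :
    ∃ P Q : Finset V, Disjoint P Q ∧ P ∪ Q = S ∧ WW w S S ≤ 4 * WW w P Q := by
  have hsw : ∀ A B, WW w A B = WW w B A := by
    intro A B; rw [WW_swap]; congr 1; funext a b; exact hs _ _
  induction S using Finset.induction_on with
  | empty => exact ⟨∅, ∅, by simp, by simp, by simp [WW]⟩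
  | insert v S hv ih =>
    obtain ⟨P, Q, hd, hu, hW⟩ := ih
    have hvP : v ∉ P := fun h => hv (hu ▸ Finset.mem_union_left _ h)
    have hvQ : v ∉ Q := fun h => hv (hu ▸ Finset.mem_union_right _ h)
    have insl : ∀ A B : Finset V, v ∉ A → WW w (insert v A) B = WW w {v} B + WW w A B := by
      intro A B h; simp [WW, Finset.sum_insert h]
    have insr : ∀ A B : Finset V, v ∉ B → WW w A (insert v B) = WW w A {v} + WW w A B := by
      intro A B h; rw [hsw, insl _ _ h, hsw, hsw B]
    have hvv : WW w {v} {v} = 0 := by simp [WW, h0]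
    have e1 : WW w (insert v S) (insert v S) = WW w S S + 2 * WW w {v} S := by
      rw [insl _ _ hv, insr _ _ hv, insr _ _ hv, hvv, hsw S {v}]; ring
    have e2 : WW w {v} S = WW w {v} P + WW w {v} Q := by
      rw [← hu]; simp [WW, Finset.sum_union hd]
    rcases le_total (WW w {v} P) (WW w {v} Q) with h | h
    · refine ⟨insert v P, Q, ?_, by rw [Finset.insert_union, hu], ?_⟩
      · rw [Finset.disjoint_insert_left]; exact ⟨hvQ, hd⟩
      · rw [e1, e2, insl _ _ hvP]; linarith
    · refine ⟨P, insert v Q, ?_, by rw [Finset.union_insert, hu], ?_⟩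
      · rw [Finset.disjoint_insert_right]; exact ⟨hvP, hd⟩
      · rw [e1, e2, insr _ _ hvQ, hsw P {v}]; linarith

lemma half_pow : ((1:ℝ)/2) ^ ((3:ℝ)/4) ≤ 3/5 := by
  have : (((1:ℝ)/2) ^ ((3:ℝ)/4)) ^ (4:ℕ) ≤ (3/5)^(4:ℕ) := by
    rw [← Real.rpow_natCast, ← Real.rpow_mul (by norm_num)]
    norm_num
  exact le_of_pow_le_pow_left₀ (by norm_num) (by norm_num) this

lemma obstruct_aux {V : Type} [DecidableEq V] (w : V → V → ℝ) (A B : Finset V) (m : ℕ) (κ : ℝ)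
    (hA : A.card = m) (hB : B.card = m) (hm : 0 < m) (hE : 0 < WW w A B)
    (H : ∀ A1 ⊆ A, ∀ B1 ⊆ B, WW w A1 B1 ≤ WW w A B * (max (A1.card : ℝ) B1.card / m) *
      (min (A1.card : ℝ) B1.card / m) ^ ((3:ℝ)/4))
    (hκ : κ ≤ WW w A B / (10 * m)) (X Y : Finset V) (hX : X ⊆ A) (hY : Y ⊆ B)
    (hXY : m < X.card + Y.card) (h2 : WW w X Y ≤ κ * Y.card)
    (hle : Y.card ≤ X.card) : False := by
  have hm' : (0:ℝ) < m := by exact_mod_cast hm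
  have e : WW w A B = WW w A (B \ Y) + (WW w (A \ X) Y + WW w X Y) := by
    rw [WW_split_right w hY, WW_split_left w hX Y]
  have hXA := Finset.card_le_card hX
  have hYB := Finset.card_le_card hY
  have ca : (A \ X).card = m - X.card := by rw [Finset.card_sdiff_of_subset hX, hA]
  have cb : (B \ Y).card = m - Y.card := by rw [Finset.card_sdiff_of_subset hY, hB]
  have b1 := H A subset_rfl (B \ Y) Finset.sdiff_subset
  have b2 := H (A \ X) Finset.sdiff_subset Y hY
  have hX' : X.card ≤ m := hA ▸ hXA
  have hY' : Y.card ≤ m := hB ▸ hYB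
  set E := WW w A B with hEdef
  have hy : 0 < Y.card := by omega
  rw [ca, Nat.cast_sub hX'] at b2
  rw [hA, cb, Nat.cast_sub hY'] at b1
  have hxy : (m : ℝ) < X.card + Y.card := by exact_mod_cast hXY
  have hyx : (Y.card : ℝ) ≤ X.card := by exact_mod_cast hle
  have hy0 : (0:ℝ) < Y.card := by exact_mod_cast hy
  have hxm : (X.card : ℝ) ≤ m := by exact_mod_cast hX'
  have hym : (Y.card : ℝ) ≤ m := by exact_mod_cast hY'
  rw [max_eq_left (by linarith), min_eq_right (by linarith), div_self hm'.ne', mul_one] at b1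
  rw [max_eq_right (by linarith), min_eq_left (by linarith)] at b2
  set y : ℝ := (Y.card : ℝ)
  set x : ℝ := (X.card : ℝ)
  have c1 : ((m - y) / m) ^ ((3:ℝ)/4) ≤ 1 - 3/4 * (y / m) := by
    have := rpow_one_add_le_one_add_mul_self (s := -(y/m)) (p := 3/4)
      (by rw [neg_le_neg_iff, div_le_one hm']; exact hym) (by norm_num) (by norm_num)
    have e' : (m - y) / m = 1 + -(y/m) := by field_simp; ring
    rw [e']; linarith
  have c2 : ((m - x) / m) ^ ((3:ℝ)/4) ≤ 3/5 := by
    refine le_trans (Real.rpow_le_rpow (div_nonneg (by linarith) hm'.le) ?_ (by norm_num)) half_pow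
    rw [div_le_iff₀ hm']; linarith
  have c3 : κ * y ≤ E * (y / m) * (1/10) := by
    calc κ * y ≤ E / (10 * m) * y := by gcongr
      _ = _ := by field_simp
  have d1 := mul_le_mul_of_nonneg_left c1 hE.le
  have hz : 0 < E * (y / m) := by positivity
  have d2 := mul_le_mul_of_nonneg_left c2 hz.le
  nlinarith

lemma obstruct {V : Type} [DecidableEq V] (w : V → V → ℝ) (A B : Finset V) (m : ℕ) (κ : ℝ)
    (hA : A.card = m) (hB : B.card = m) (hm : 0 < m) (hE : 0 < WW w A B)
    (H : ∀ A1 ⊆ A, ∀ B1 ⊆ B, WW w A1 B1 ≤ WW w A B * (max (A1.card : ℝ) B1.card / m) *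
      (min (A1.card : ℝ) B1.card / m) ^ ((3:ℝ)/4))
    (hκ : κ ≤ WW w A B / (10 * m)) (X Y : Finset V) (hX : X ⊆ A) (hY : Y ⊆ B)
    (hXY : m < X.card + Y.card) (h1 : WW w X Y ≤ κ * X.card) (h2 : WW w X Y ≤ κ * Y.card) :
    False := by
  rcases le_total Y.card X.card with h | h
  · exact obstruct_aux w A B m κ hA hB hm hE H hκ X Y hX hY hXY h2 h
  · refine obstruct_aux (fun a b => w b a) B A m κ hB hA hm ?_ ?_ ?_ Y X hY hX (by omega) ?_ h
    · rwa [← WW_swap w]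
    · intro B1 hB1 A1 hA1
      rw [← WW_swap w, ← WW_swap w, max_comm, min_comm]
      exact H A1 hA1 B1 hB1
    · rwa [← WW_swap w]
    · rwa [← WW_swap w]

lemma H_aux {V : Type} [DecidableEq V] (w : V → V → ℝ) (A B : Finset V) (m : ℕ) (E : ℝ)
    (hm : 0 < m)
    (hmax : ∀ A1 ⊆ A, ∀ B1 ⊆ B, A1.card = B1.card → 0 < A1.card →
      WW w A1 B1 ≤ E * ((A1.card : ℝ) / m) ^ ((7:ℝ)/4))
    (A1 B1 : Finset V) (hA1 : A1 ⊆ A) (hB1 : B1 ⊆ B) (hle : A1.card ≤ B1.card) :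
    WW w A1 B1 ≤ E * (max (A1.card : ℝ) B1.card / m) *
      (min (A1.card : ℝ) B1.card / m) ^ ((3:ℝ)/4) := by
  have hle' : (A1.card : ℝ) ≤ B1.card := by exact_mod_cast hle
  rw [max_eq_right hle', min_eq_left hle']
  have hm' : (0:ℝ) < m := by exact_mod_cast hm
  rcases Nat.eq_zero_or_pos A1.card with h | h
  · rw [h]
    rw [Finset.card_eq_zero] at h
    subst h
    simp [WW]
  · obtain ⟨B', h1, h2, h3⟩ := avg (fun b => ∑ a ∈ A1, w a b) A1.card h B1.card B1 rfl hle
    have k := hmax A1 hA1 B' (h1.trans hB1) h2.symm h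
    have e1 : ∑ b ∈ B1, ∑ a ∈ A1, w a b = WW w A1 B1 := by rw [WW]; exact Finset.sum_comm
    have e2 : ∑ b ∈ B', ∑ a ∈ A1, w a b = WW w A1 B' := by rw [WW]; exact Finset.sum_comm
    rw [e1, e2] at h3
    have hs : (0:ℝ) < A1.card := by exact_mod_cast h
    refine le_of_mul_le_mul_left (h3.trans ?_) hs
    calc (B1.card : ℝ) * WW w A1 B' ≤ B1.card * (E * ((A1.card : ℝ) / m) ^ ((7:ℝ)/4)) := by gcongr
      _ = _ := by
        rw [show (7:ℝ)/4 = 1 + 3/4 by norm_num, Real.rpow_add (by positivity), Real.rpow_one]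
        field_simp

lemma maximizer {V : Type} [DecidableEq V] (w : V → V → ℝ) (P Q A0 B0 : Finset V)
    (hA0 : A0 ⊆ P) (hB0 : B0 ⊆ Q) (hc : A0.card = B0.card) (hp : 0 < A0.card) :
    ∃ A ⊆ P, ∃ B ⊆ Q, ∃ m : ℕ, 0 < m ∧ A.card = m ∧ B.card = m ∧
      WW w A0 B0 / (A0.card : ℝ) ^ ((7:ℝ)/4) ≤ WW w A B / (m : ℝ) ^ ((7:ℝ)/4) ∧
      ∀ A1 ⊆ A, ∀ B1 ⊆ B, WW w A1 B1 ≤ WW w A B * (max (A1.card : ℝ) B1.card / m) *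
        (min (A1.card : ℝ) B1.card / m) ^ ((3:ℝ)/4) := by
  obtain ⟨⟨A, B⟩, hAB, hmx⟩ := ((P.powerset ×ˢ Q.powerset).filter
    (fun p => p.1.card = p.2.card ∧ 0 < p.1.card)).exists_max_image
      (fun p => WW w p.1 p.2 / (p.1.card : ℝ) ^ ((7:ℝ)/4)) ⟨(A0, B0), by
        simp only [Finset.mem_filter, Finset.mem_product, Finset.mem_powerset]
        exact ⟨⟨hA0, hB0⟩, hc, hp⟩⟩

  simp only [Finset.mem_filter, Finset.mem_product, Finset.mem_powerset] at hAB hmx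
  obtain ⟨⟨hA, hB⟩, hAB, hpos⟩ := hAB
  have hm' : (0:ℝ) < A.card := by exact_mod_cast hpos
  have hmax : ∀ A1 ⊆ A, ∀ B1 ⊆ B, A1.card = B1.card → 0 < A1.card →
      WW w A1 B1 ≤ WW w A B * ((A1.card : ℝ) / A.card) ^ ((7:ℝ)/4) := by
    intro A1 h1 B1 h2 h3 h4
    have h4' : (0:ℝ) < A1.card := by exact_mod_cast h4
    have := hmx (A1, B1) ⟨⟨h1.trans hA, h2.trans hB⟩, h3, h4⟩
    simp only at this
    rw [div_le_iff₀ (by positivity)] at this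
    rw [Real.div_rpow h4'.le hm'.le]
    refine this.trans (le_of_eq ?_)
    ring
  refine ⟨A, hA, B, hB, A.card, hpos, rfl, hAB.symm, hmx (A0, B0) ⟨⟨hA0, hB0⟩, hc, hp⟩, ?_⟩
  intro A1 hA1 B1 hB1
  rcases le_total A1.card B1.card with h | h
  · exact H_aux w A B A.card _ hpos hmax A1 B1 hA1 hB1 h
  · rw [WW_swap w A1, max_comm, min_comm]
    refine H_aux (fun a b => w b a) B A A.card _ hpos ?_ B1 A1 hB1 hA1 h
    intro B2 hB2 A2 hA2 h5 h6
    rw [← WW_swap w, h5]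
    exact hmax A2 hA2 B2 hB2 h5.symm (h5 ▸ h6)

open Classical in
/-- indicator weight of a relation -/
noncomputable def wt {V : Type} (r : V → V → Prop) (a b : V) : ℝ := if r a b then 1 else 0

open Classical in
lemma matchings {V : Type} (r : V → V → Prop) (A B : Finset V) (m : ℕ)
    (hA : A.card = m) (hB : B.card = m) (hm : 0 < m) (hE : 0 < WW (wt r) A B)
    (H : ∀ A1 ⊆ A, ∀ B1 ⊆ B, WW (wt r) A1 B1 ≤
      WW (wt r) A B * (max (A1.card : ℝ) B1.card / m) *
      (min (A1.card : ℝ) B1.card / m) ^ ((3:ℝ)/4)) (i : ℕ)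
    (hi : (i : ℝ) ≤ WW (wt r) A B / (10 * m) + 1) :
    ∃ f : ℕ → V → V, (∀ j < i, ∀ a ∈ A, f j a ∈ B ∧ r a (f j a)) ∧
      (∀ j < i, Set.InjOn (f j) A) ∧
      (∀ j < i, ∀ l < i, ∀ a ∈ A, f j a = f l a → j = l) := by
  induction i with
  | zero => exact ⟨fun _ a => a, by simp, by simp, by simp⟩
  | succ i ih =>
    push_cast at hi
    obtain ⟨f, h1, h2, h3⟩ := ih (by linarith)
    have hall : ∀ S : Finset A, S.card ≤
        (S.biUnion (fun a : A => B.filter (fun b => r a b ∧ ∀ j < i, f j a ≠ b))).card := by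
      intro S
      by_contra hlt
      push Not at hlt
      set N := S.biUnion (fun a : A => B.filter (fun b => r a b ∧ ∀ j < i, f j a ≠ b)) with hN
      have hNB : N ⊆ B := by
        intro b hb
        simp only [hN, Finset.mem_biUnion, Finset.mem_filter] at hb
        obtain ⟨a, _, hb, _⟩ := hb
        exact hb
      have hXc : (S.map (Function.Embedding.subtype _)).card = S.card := Finset.card_map _
      have hXA : S.map (Function.Embedding.subtype _) ⊆ A := by
        intro a ha
        simp only [Finset.mem_map, Function.Embedding.subtype_apply] at ha
        obtain ⟨x, _, rfl⟩ := ha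
        exact x.2
      have key : ∀ a ∈ S.map (Function.Embedding.subtype _), ∀ b ∈ B \ N,
          r a b → ∃ j < i, f j a = b := by
        intro a ha b hb hr
        simp only [Finset.mem_map, Function.Embedding.subtype_apply] at ha
        obtain ⟨x, hx, rfl⟩ := ha
        by_contra hcon
        push Not at hcon
        rw [Finset.mem_sdiff] at hb
        apply hb.2
        simp only [hN, Finset.mem_biUnion, Finset.mem_filter]
        exact ⟨x, hx, hb.1, hr, hcon⟩
      set X := S.map (Function.Embedding.subtype _) with hX
      have hNc := Finset.card_le_card hNB
      refine obstruct (wt r) A B m i hA hB hm hE H (by linarith) X (B \ N) hXA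
        Finset.sdiff_subset ?_ ?_ ?_
      · rw [Finset.card_sdiff_of_subset hNB]; omega
      · rw [WW, mul_comm, ← nsmul_eq_mul]
        refine Finset.sum_le_card_nsmul _ _ _ fun a ha => ?_
        simp only [wt]
        rw [Finset.sum_boole]
        have : ((B \ N).filter (fun b => r a b)) ⊆ (Finset.range i).image (fun j => f j a) := by
          intro b hb
          rw [Finset.mem_filter] at hb
          obtain ⟨j, hj, e⟩ := key a ha b hb.1 hb.2
          exact Finset.mem_image.2 ⟨j, Finset.mem_range.2 hj, e⟩
        have := (Finset.card_le_card this).trans Finset.card_image_le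
        rw [Finset.card_range] at this
        exact_mod_cast this
      · rw [WW_swap, WW, mul_comm, ← nsmul_eq_mul]
        refine Finset.sum_le_card_nsmul _ _ _ fun b hb => ?_
        simp only [wt]
        rw [Finset.sum_boole]
        have : (X.filter (fun a => r a b)).card ≤ (Finset.range i).card := by
          have hch : ∀ a ∈ X.filter (fun a => r a b), ∃ j ∈ Finset.range i, f j a = b := by
            intro a ha
            rw [Finset.mem_filter] at ha
            obtain ⟨j, hj, e⟩ := key a ha.1 b hb ha.2
            exact ⟨j, Finset.mem_range.2 hj, e⟩
          choose! g hg1 hg2 using hch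
          refine Finset.card_le_card_of_injOn g (fun a ha => hg1 a ha) ?_
          intro a ha a' ha' e
          have e1 := hg2 a ha
          have e2 := hg2 a' ha'
          have hj := Finset.mem_range.1 (hg1 a' ha')
          rw [e] at e1
          exact h2 _ hj (hXA (Finset.mem_filter.1 ha).1) (hXA (Finset.mem_filter.1 ha').1)
            (e1.trans e2.symm)
        rw [Finset.card_range] at this
        exact_mod_cast this
    obtain ⟨g, hg1, hg2⟩ := (Finset.all_card_le_biUnion_card_iff_exists_injective _).1 hall
    simp only [Finset.mem_filter] at hg2
    refine ⟨fun j a => if j < i then f j a else if h : a ∈ A then g ⟨a, h⟩ else a, ?_, ?_, ?_⟩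
    · intro j hj a ha
      by_cases hji : j < i
      · simpa [hji] using h1 j hji a ha
      · simpa [hji, ha] using ⟨(hg2 ⟨a, ha⟩).1, (hg2 ⟨a, ha⟩).2.1⟩
    · intro j hj
      by_cases hji : j < i
      · simpa [hji] using h2 j hji
      · intro a ha a' ha' e
        have ha : a ∈ A := ha
        have ha' : a' ∈ A := ha'
        simp only [hji, ha, ha', if_false, dif_pos] at e
        have := hg1 e
        simpa using this
    · intro j hj l hl a ha e
      by_cases hji : j < i <;> by_cases hli : l < i
      · simp only [hji, hli, if_true] at e
        exact h3 j hji l hli a ha e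
      · simp only [hji, hli, if_true, if_false, ha, dif_pos] at e
        exact absurd e ((hg2 ⟨a, ha⟩).2.2 j hji)
      · simp only [hji, hli, if_true, if_false, ha, dif_pos] at e
        exact absurd e.symm ((hg2 ⟨a, ha⟩).2.2 l hli)
      · omega

lemma colored {V : Type} [Fintype V] (G : SimpleGraph V) (A B : Finset V) (hd : Disjoint A B)
    (m k : ℕ) (hA : A.card = m) (hB : B.card = m) (f : ℕ → V → V)
    (h1 : ∀ j < k, ∀ a ∈ A, f j a ∈ B ∧ G.Adj a (f j a))
    (h2 : ∀ j < k, Set.InjOn (f j) A)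
    (h3 : ∀ j < k, ∀ l < k, ∀ a ∈ A, f j a = f l a → j = l) :
    ∃ H : SimpleGraph V, H ≤ G ∧ IntervalColorable H ∧ m * k ≤ H.edgeSet.ncard := by
  classical
  have hdis : ∀ a ∈ A, ∀ b ∈ B, a ≠ b := fun a ha b hb => by
    rintro rfl
    exact Finset.disjoint_left.1 hd ha hb
  have huniq : ∀ j < k, ∀ l < k, ∀ a ∈ A, ∀ b ∈ A, s(a, f j a) = s(b, f l b) → a = b ∧ j = l := by
    intro j hj l hl a ha b hb e
    rw [Sym2.eq_iff] at e
    rcases e with ⟨rfl, e⟩ | ⟨e, -⟩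
    · exact ⟨rfl, h3 j hj l hl a ha e⟩
    · exact absurd e (hdis a ha _ (h1 l hl b hb).1)
  set T : Set (Sym2 V) := {e | ∃ j < k, ∃ a ∈ A, e = s(a, f j a)} with hT
  have hTG : T ⊆ G.edgeSet := by
    rintro e ⟨j, hj, a, ha, rfl⟩
    exact (h1 j hj a ha).2
  have hES : (SimpleGraph.fromEdgeSet T).edgeSet = T := by
    rw [SimpleGraph.edgeSet_fromEdgeSet]
    refine sdiff_eq_left.2 (Set.disjoint_left.2 fun e he hdg => ?_)
    exact G.not_isDiag_of_mem_edgeSet (hTG he) hdg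
  have hcol : ∃ c : Sym2 V → ℤ, ∀ j < k, ∀ a ∈ A, c s(a, f j a) = (j : ℤ) := by
    have : ∀ e : Sym2 V, ∃ z : ℤ, ∀ j < k, ∀ a ∈ A, e = s(a, f j a) → z = (j : ℤ) := by
      intro e
      by_cases he : e ∈ T
      · obtain ⟨j, hj, a, ha, rfl⟩ := he
        refine ⟨j, fun l hl b hb e => ?_⟩
        exact_mod_cast (huniq j hj l hl a ha b hb e).2
      · refine ⟨0, fun j hj a ha e => absurd ⟨j, hj, a, ha, e⟩ he⟩
    choose c hc using this
    exact ⟨c, fun j hj a ha => hc _ j hj a ha rfl⟩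
  obtain ⟨c, hc⟩ := hcol
  refine ⟨SimpleGraph.fromEdgeSet T, ?_, ⟨c, ?_, ?_⟩, ?_⟩
  · rw [← SimpleGraph.edgeSet_subset_edgeSet, hES]; exact hTG
  · rw [hES]
    rintro e ⟨j, hj, a, ha, rfl⟩ e' ⟨l, hl, b, hb, rfl⟩ hne ⟨v, hv, hv'⟩ heq
    rw [hc j hj a ha, hc l hl b hb] at heq
    have hjl : j = l := by exact_mod_cast heq
    subst hjl
    rw [Sym2.mem_iff] at hv hv'
    rcases hv with rfl | rfl <;> rcases hv' with e | e
    · subst e; exact hne rfl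
    · exact hdis _ ha _ (h1 j hj b hb).1 e
    · exact hdis _ hb _ (h1 j hj a ha).1 e.symm
    · have := h2 j hj ha hb e
      subst this; exact hne rfl
  · rw [hES]
    rintro v x y z hxy hyz ⟨e, ⟨j, hj, a, ha, rfl⟩, hv, hx⟩ ⟨e', ⟨l, hl, b, hb, rfl⟩, -, hz⟩
    rw [hc j hj a ha] at hx
    rw [hc l hl b hb] at hz
    obtain ⟨n, rfl⟩ : ∃ n : ℕ, y = n := ⟨y.toNat, by omega⟩
    have hn : n < k := by omega
    rw [Sym2.mem_iff] at hv
    rcases hv with rfl | rfl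
    · exact ⟨_, ⟨n, hn, v, ha, rfl⟩, Sym2.mem_mk_left _ _, hc n hn v ha⟩
    · have hsurj : A.image (f n) = B := by
        refine Finset.eq_of_subset_of_card_le ?_ ?_
        · intro b hb
          obtain ⟨a, ha, rfl⟩ := Finset.mem_image.1 hb
          exact (h1 n hn a ha).1
        · rw [Finset.card_image_of_injOn (h2 n hn), hA, hB]
      have hvB := (h1 j hj a ha).1
      rw [← hsurj, Finset.mem_image] at hvB
      obtain ⟨a', ha', e⟩ := hvB
      exact ⟨_, ⟨n, hn, a', ha', rfl⟩, by rw [← e]; exact Sym2.mem_mk_right _ _, hc n hn a' ha'⟩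
  · rw [hES]
    have : ((A ×ˢ Finset.range k).image (fun p => s(p.1, f p.2 p.1))).card = m * k := by
      rw [Finset.card_image_of_injOn, Finset.card_product, hA, Finset.card_range]
      rintro ⟨a, j⟩ h ⟨b, l⟩ h' e
      simp only [Finset.coe_product, Set.mem_prod, Finset.mem_coe, Finset.mem_range] at h h'
      have := huniq j h.2 l h'.2 a h.1 b h'.1 e
      rw [Prod.mk.injEq]; exact this
    rw [← this, ← Set.ncard_coe_finset]
    refine Set.ncard_le_ncard ?_ (Set.toFinite _)
    intro e he
    rw [Finset.mem_coe, Finset.mem_image] at he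
    obtain ⟨⟨a, j⟩, h, rfl⟩ := he
    rw [Finset.mem_product, Finset.mem_range] at h
    exact ⟨j, h.2, a, h.1, rfl⟩

lemma thick_step {V : Type} (G H : SimpleGraph V) (k : ℕ) (hG : IntervalThicknessLE G k)
    (hH : IntervalColorable H) (hd : Disjoint G.edgeSet H.edgeSet) :
    IntervalThicknessLE (G ⊔ H) (k + 1) := by
  classical
  obtain ⟨f, hf⟩ := hG
  refine ⟨fun e => if e ∈ H.edgeSet then Fin.last k else (f e).castSucc, fun i => ?_⟩
  refine Fin.lastCases ?_ (fun i => ?_) i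
  · convert hH
    rw [← SimpleGraph.fromEdgeSet_edgeSet H]
    congr 1
    ext e
    rw [SimpleGraph.fromEdgeSet_edgeSet H]
    simp only [Set.mem_setOf_eq, SimpleGraph.edgeSet_sup, Set.mem_union]
    by_cases h : e ∈ H.edgeSet
    · simp [h]
    · simp [h, (Fin.castSucc_lt_last _).ne]
  · convert hf i using 3
    ext e
    simp only [SimpleGraph.edgeSet_sup, Set.mem_union]
    by_cases h : e ∈ H.edgeSet
    · have := Set.disjoint_right.1 hd h
      simp [h, this, (Fin.castSucc_lt_last _).ne']
    · simp [h]

lemma bot_colorable {V : Type} : IntervalColorable (⊥ : SimpleGraph V) :=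
  ⟨fun _ => 0, by simp, by simp⟩

lemma edge_count {V : Type} [Fintype V] (G : SimpleGraph V) :
    WW (wt G.Adj) Finset.univ Finset.univ = 2 * (G.edgeSet.ncard : ℝ) := by
  classical
  have h := G.sum_degrees_eq_twice_card_edges
  have h2 : G.edgeSet.ncard = G.edgeFinset.card := by
    rw [← Set.ncard_coe_finset, SimpleGraph.coe_edgeFinset]
  rw [h2]
  have : (∑ v, (G.degree v : ℝ)) = 2 * (G.edgeFinset.card : ℝ) := by exact_mod_cast h
  rw [← this, WW]
  refine Finset.sum_congr rfl fun v _ => ?_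
  simp only [wt]
  rw [Finset.sum_boole, ← SimpleGraph.card_neighborFinset_eq_degree, SimpleGraph.neighborFinset_eq_filter]

lemma WW_le {V : Type} (r : V → V → Prop) (A B : Finset V) :
    WW (wt r) A B ≤ A.card * B.card := by
  rw [WW, ← nsmul_eq_mul]
  refine Finset.sum_le_card_nsmul _ _ _ fun a _ => ?_
  calc ∑ b ∈ B, wt r a b ≤ B.card • (1:ℝ) := by
        refine Finset.sum_le_card_nsmul _ _ _ fun b _ => ?_
        unfold wt; split_ifs <;> norm_num
    _ = _ := by simp

lemma dense_step (γ : ℝ) (hγ : 0 < γ) {V : Type} [Fintype V] (G : SimpleGraph V)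
    (hG : γ * (Fintype.card V : ℝ) ^ 2 < G.edgeSet.ncard) :
    ∃ H : SimpleGraph V, H ≤ G ∧ IntervalColorable H ∧
      (γ/2) ^ 8 / 10 * (Fintype.card V : ℝ) ^ 2 ≤ H.edgeSet.ncard := by
  classical
  set n : ℝ := (Fintype.card V : ℝ) with hn
  have hsym : ∀ a b, wt G.Adj a b = wt G.Adj b a := fun a b => by simp [wt, G.adj_comm]
  have hsw : ∀ A B, WW (wt G.Adj) A B = WW (wt G.Adj) B A := by
    intro A B; rw [WW_swap]; congr 1; funext a b; exact hsym _ _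
  obtain ⟨P, Q, hd, hu, hW⟩ : ∃ P Q : Finset V, Disjoint P Q ∧ Q.card ≤ P.card ∧
      γ * n ^ 2 / 2 < WW (wt G.Adj) P Q := by
    obtain ⟨P, Q, hd, -, hW⟩ := max_cut (wt G.Adj) hsym (by simp [wt]) Finset.univ
    rw [edge_count] at hW
    rcases le_total Q.card P.card with h | h
    · exact ⟨P, Q, hd, h, by linarith⟩
    · exact ⟨Q, P, hd.symm, h, by rw [hsw]; linarith⟩
  have hn0 : 0 ≤ n := Nat.cast_nonneg _
  have hWpos : 0 < WW (wt G.Adj) P Q := lt_of_le_of_lt (by positivity) hW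
  have hq : 0 < Q.card := by
    rw [Finset.card_pos, Finset.nonempty_iff_ne_empty]
    rintro rfl
    simp [WW] at hWpos
  have hPn : (P.card : ℝ) ≤ n := by rw [hn]; exact_mod_cast Finset.card_le_univ P
  have hq' : (0:ℝ) < Q.card := by exact_mod_cast hq
  have hQP : (Q.card : ℝ) ≤ P.card := by exact_mod_cast hu
  have hnpos : 0 < n := by linarith
  obtain ⟨A0, hA0, hA0c, hA0W⟩ := avg (fun a => ∑ b ∈ Q, wt G.Adj a b) Q.card hq P.card P rfl hu
  change (Q.card : ℝ) * WW (wt G.Adj) P Q ≤ P.card * WW (wt G.Adj) A0 Q at hA0W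
  have hA0W' : γ * n * Q.card / 2 ≤ WW (wt G.Adj) A0 Q := by
    have hnn : 0 ≤ WW (wt G.Adj) A0 Q := by
      refine Finset.sum_nonneg fun a _ => Finset.sum_nonneg fun b _ => ?_
      unfold wt; split_ifs <;> norm_num
    have : (Q.card : ℝ) * (γ * n ^ 2 / 2) ≤ n * WW (wt G.Adj) A0 Q := by
      refine le_trans (mul_le_mul_of_nonneg_left hW.le hq'.le) (hA0W.trans ?_)
      gcongr
    refine le_of_mul_le_mul_left (le_trans (le_of_eq ?_) this) hnpos
    ring
  obtain ⟨A, hA, B, hB, m, hm, hAm, hBm, hΦ, H⟩ := maximizer (wt G.Adj) P Q A0 Q hA0 subset_rfl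
    hA0c (by omega)
  have hm' : (0:ℝ) < m := by exact_mod_cast hm
  set E := WW (wt G.Adj) A B with hE
  have hEm : E ≤ (m:ℝ) * m := by
    have := WW_le G.Adj A B
    rwa [hAm, hBm] at this
  rw [hA0c] at hΦ
  -- lower bound on the potential
  have hΦ2 : γ / 2 * n ^ ((1:ℝ)/4) * (m:ℝ) ^ ((7:ℝ)/4) ≤ E := by
    rw [← le_div_iff₀ (by positivity)]
    refine le_trans ?_ hΦ
    rw [le_div_iff₀ (by positivity)]
    refine le_trans ?_ hA0W'
    have e1 : (Q.card : ℝ) ^ ((7:ℝ)/4) = Q.card * (Q.card : ℝ) ^ ((3:ℝ)/4) := by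
      rw [show (7:ℝ)/4 = 1 + 3/4 by norm_num, Real.rpow_add hq', Real.rpow_one]
    have e2 : (Q.card : ℝ) ^ ((3:ℝ)/4) ≤ n ^ ((3:ℝ)/4) :=
      Real.rpow_le_rpow hq'.le (by linarith) (by norm_num)
    have e3 : n ^ ((1:ℝ)/4) * n ^ ((3:ℝ)/4) = n := by
      rw [← Real.rpow_add hnpos]; norm_num
    rw [e1]
    calc γ / 2 * n ^ ((1:ℝ)/4) * (Q.card * (Q.card : ℝ) ^ ((3:ℝ)/4))
        ≤ γ / 2 * n ^ ((1:ℝ)/4) * (Q.card * n ^ ((3:ℝ)/4)) := by gcongr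
      _ = γ / 2 * Q.card * (n ^ ((1:ℝ)/4) * n ^ ((3:ℝ)/4)) := by ring
      _ = _ := by rw [e3]; ring
  have hEpos : 0 < E := lt_of_lt_of_le (by positivity) hΦ2
  have hEn : (γ/2) ^ 8 * n ^ 2 ≤ E := by
    set u := n ^ ((1:ℝ)/4) with hu
    set t := (m:ℝ) ^ ((1:ℝ)/4) with ht
    have hun : n = u ^ 4 := by rw [hu, ← Real.rpow_natCast, ← Real.rpow_mul hn0]; norm_num
    have htm : (m:ℝ) = t ^ 4 := by rw [ht, ← Real.rpow_natCast, ← Real.rpow_mul hm'.le]; norm_num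
    have htm7 : (m:ℝ) ^ ((7:ℝ)/4) = t ^ 7 := by
      rw [ht, ← Real.rpow_natCast, ← Real.rpow_mul hm'.le]; norm_num
    have htp : 0 < t := by positivity
    have hup : 0 < u := by positivity
    rw [htm7] at hΦ2
    rw [htm] at hEm
    have hut : γ / 2 * u ≤ t := by
      have : γ / 2 * u * t ^ 7 ≤ t * t ^ 7 := by
        calc _ ≤ E := hΦ2
          _ ≤ _ := hEm
          _ = _ := by ring
      exact le_of_mul_le_mul_right this (by positivity)
    rw [hun]
    calc (γ/2) ^ 8 * (u^4)^2 = (γ / 2 * u) * (γ / 2 * u) ^ 7 := by ring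
      _ ≤ (γ / 2 * u) * t ^ 7 := by gcongr
      _ ≤ E := hΦ2
  set k := ⌊E / (10 * m)⌋₊ + 1 with hk
  have hk1 : (k : ℝ) ≤ E / (10 * m) + 1 := by
    rw [hk]; push_cast
    have := Nat.floor_le (by positivity : 0 ≤ E / (10 * m))
    linarith
  have hk2 : E / (10 * m) ≤ k := by
    rw [hk]; push_cast
    exact (Nat.lt_floor_add_one _).le
  obtain ⟨f, h1, h2, h3⟩ := matchings G.Adj A B m hAm hBm hm hEpos H k hk1
  obtain ⟨H', hle, hcol, hcard⟩ := colored G A B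
    (Finset.disjoint_of_subset_left hA (Finset.disjoint_of_subset_right hB hd)) m k hAm hBm f h1 h2 h3
  refine ⟨H', hle, hcol, ?_⟩
  have hcard' : (m : ℝ) * k ≤ H'.edgeSet.ncard := by exact_mod_cast hcard
  have : E / 10 ≤ m * k := by
    calc E / 10 = m * (E / (10 * m)) := by field_simp
      _ ≤ _ := by gcongr
  linarith

lemma greedy (γ : ℝ) (hγ : 0 < γ) {V : Type} [Fintype V] (G : SimpleGraph V) (N : ℕ) :
    ∃ G' : SimpleGraph V, G' ≤ G ∧ IntervalThicknessLE G' (N + 1) ∧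
      ((G.edgeSet.ncard : ℝ) - G'.edgeSet.ncard ≤ γ * (Fintype.card V : ℝ) ^ 2 ∨
       N * ((γ/2) ^ 8 / 10 * (Fintype.card V : ℝ) ^ 2) ≤ G'.edgeSet.ncard) := by
  induction N with
  | zero =>
    refine ⟨⊥, bot_le, ⟨fun _ => 0, fun i => ?_⟩, Or.inr (by simp)⟩
    simpa using bot_colorable
  | succ N ih =>
    obtain ⟨G', hle, ht, h⟩ := ih
    by_cases h1 : (G.edgeSet.ncard : ℝ) - G'.edgeSet.ncard ≤ γ * (Fintype.card V : ℝ) ^ 2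
    · refine ⟨G', hle, ?_, Or.inl h1⟩
      have := thick_step G' ⊥ (N + 1) ht bot_colorable (by simp)
      simpa using this
    · have h2 := h.resolve_left h1
      push Not at h1
      have hsub : G'.edgeSet ⊆ G.edgeSet := SimpleGraph.edgeSet_subset_edgeSet.2 hle
      have hc : ((G \ G').edgeSet.ncard : ℝ) = G.edgeSet.ncard - G'.edgeSet.ncard := by
        rw [SimpleGraph.edgeSet_sdiff, eq_sub_iff_add_eq]
        exact_mod_cast Set.ncard_sdiff_add_ncard_of_subset hsub (Set.toFinite _)
      obtain ⟨H, hH, hcol, hcard⟩ := dense_step γ hγ (G \ G') (by rw [hc]; exact h1)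
      have hdis : Disjoint G'.edgeSet H.edgeSet := by
        have := SimpleGraph.edgeSet_subset_edgeSet.2 hH
        rw [SimpleGraph.edgeSet_sdiff] at this
        exact Set.disjoint_of_subset_right this Set.disjoint_sdiff_right
      refine ⟨G' ⊔ H, sup_le hle (hH.trans sdiff_le), thick_step _ _ _ ht hcol hdis, Or.inr ?_⟩
      rw [SimpleGraph.edgeSet_sup, Set.ncard_union_eq hdis (Set.toFinite _) (Set.toFinite _)]
      push_cast
      linarith

/-- For every `0 < γ < 1/2` there is `M` such that every finite graph `G` has a
subgraph `G'` with interval thickness at most `M` missing at most `γ|V(G)|²` edges. -/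
theorem stmt12 (γ : ℝ) (hγ1 : 0 < γ) (hγ2 : γ < 1/2) :
    ∃ M : ℕ, ∀ (V : Type) [Fintype V] (G : SimpleGraph V),
      ∃ G' : SimpleGraph V, G' ≤ G ∧ IntervalThicknessLE G' M ∧
        (G.edgeSet.ncard : ℝ) - (G'.edgeSet.ncard : ℝ) ≤ γ * (Fintype.card V : ℝ) ^ 2 := by
  obtain ⟨N, hN⟩ := exists_nat_ge (1 / ((γ/2) ^ 8 / 10))
  refine ⟨N + 1, fun V _ G => ?_⟩
  obtain ⟨G', hle, ht, h⟩ := greedy γ hγ1 G N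
  refine ⟨G', hle, ht, ?_⟩
  rcases h with h | h
  · exact h
  · have h1 : (1:ℝ) ≤ N * ((γ/2) ^ 8 / 10) := by
      rwa [div_le_iff₀ (by positivity)] at hN
    have h2 := edge_count G
    have h3 := WW_le G.Adj Finset.univ Finset.univ
    rw [h2, Finset.card_univ] at h3
    have h4 := mul_le_mul_of_nonneg_right h1 (sq_nonneg (Fintype.card V : ℝ))
    have h5 : (0:ℝ) ≤ G.edgeSet.ncard := Nat.cast_nonneg _
    have h6 : 0 ≤ γ * (Fintype.card V : ℝ) ^ 2 := by positivity
    nlinarith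
end

section
/- For any natural numbers k and d there exists a finite bipartite graph G that is interval colorable and whose interval spectrum S(G) has exactly k gaps, each of size at least d. -/
/-- The interval spectrum of `G`: the set of `t` such that `G` has an interval
edge-coloring using exactly `t` distinct colors. -/
def intervalSpectrum {V : Type*} (G : SimpleGraph V) : Set ℕ :=
  {t | ∃ c : Sym2 V → ℤ, IsIntervalColoring G c ∧
    {x : ℤ | ∃ e ∈ G.edgeSet, c e = x}.ncard = t}

/-- `[a, b]` is a gap of `S ⊆ ℕ`: a maximal nonempty run of consecutive integers
disjoint from `S`, lying strictly between elements of `S`. -/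
def IsGap (S : Set ℕ) (a b : ℕ) : Prop :=
  0 < a ∧ a ≤ b ∧ (∀ x, a ≤ x → x ≤ b → x ∉ S) ∧ (a - 1) ∈ S ∧ (b + 1) ∈ S


section Gaps

lemma gaps_of_clusters (S : Set ℕ) (k d t : ℕ) (Q : ℕ → ℕ)
    (hsep : ∀ i j, i < j → Q i + 2 * t + d + 2 ≤ Q j)
    (hQ : ∀ j, j ≤ k → Q j ∈ S)
    (h : ∀ T ∈ S, ∃ j, j ≤ k ∧ T ≤ Q j + t ∧ Q j ≤ T + t ∧
      ∀ x, (T ≤ x ∧ x ≤ Q j ∨ Q j ≤ x ∧ x ≤ T) → x ∈ S) :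
    ∃ gaps : Finset (ℕ × ℕ), gaps.card = k ∧
        (∀ p ∈ gaps, IsGap S p.1 p.2 ∧ d ≤ p.2 + 1 - p.1) ∧
        (∀ a b : ℕ, IsGap S a b → (a, b) ∈ gaps) := by
  classical
  have hhi : ∀ j, ∃ a, j ≤ k → a ∈ S ∧ Q j ≤ a ∧ a ≤ Q j + t ∧
      ∀ x ∈ S, x ≤ Q j + t → x ≤ a := by
    intro j
    by_cases hj : j ≤ k
    · let F := (Finset.range (Q j + t + 1)).filter (· ∈ S)
      have hmem : Q j ∈ F := by simp [F, hQ j hj]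
      refine ⟨F.max' ⟨_, hmem⟩, fun _ => ?_⟩
      have h1 := F.max'_mem ⟨_, hmem⟩
      have h2 := F.le_max' _ hmem
      have h3 : F.max' ⟨_, hmem⟩ < Q j + t + 1 ∧ F.max' ⟨_, hmem⟩ ∈ S := by
        simpa [F] using h1
      refine ⟨h3.2, h2, by omega, fun x hx hxl => F.le_max' _ ?_⟩
      simp [F, hx]; omega
    · exact ⟨0, fun h => absurd h hj⟩
  have hlo : ∀ j, ∃ a, j ≤ k → a ∈ S ∧ a ≤ Q j ∧ Q j ≤ a + t ∧
      ∀ x ∈ S, Q j ≤ x + t → a ≤ x := by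
    intro j
    by_cases hj : j ≤ k
    · let P := fun a => a ∈ S ∧ Q j ≤ a + t
      have hP : ∃ a, P a := ⟨Q j, hQ j hj, by omega⟩
      refine ⟨Nat.find hP, fun _ => ?_⟩
      have h1 := Nat.find_spec hP
      refine ⟨h1.1, Nat.find_min' hP ⟨hQ j hj, by omega⟩, h1.2, fun x hx hxl => ?_⟩
      exact Nat.find_min' hP ⟨hx, hxl⟩
    · exact ⟨0, fun h => absurd h hj⟩
  choose hi hhi using hhi
  choose lo hlo using hlo
  refine ⟨(Finset.range k).image (fun j => (hi j + 1, lo (j + 1) - 1)), ?_, ?_, ?_⟩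
  · rw [Finset.card_image_of_injOn, Finset.card_range]
    intro a ha b hb hab
    simp only [Finset.coe_range, Set.mem_Iio] at ha hb
    have h0 : hi a = hi b := by simpa using (Prod.mk.inj hab).1
    have h1 := hhi a (by omega)
    have h2 := hhi b (by omega)
    rcases lt_trichotomy a b with hl | hl | hl
    · have := hsep a b hl; omega
    · exact hl
    · have := hsep b a hl; omega
  · intro p hp
    simp only [Finset.mem_image, Finset.mem_range] at hp
    obtain ⟨j, hj, rfl⟩ := hp
    obtain ⟨a1, a2, a3, a4⟩ := hhi j (by omega)
    obtain ⟨b1, b2, b3, b4⟩ := hlo (j + 1) (by omega)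
    have hs := hsep j (j + 1) (by omega)
    refine ⟨⟨by simp, by simp only; omega, ?_, by simpa using a1, ?_⟩, by simp only; omega⟩
    · intro x hx1 hx2 hxS
      simp only at hx1 hx2
      obtain ⟨i, hi1, hi2, hi3, -⟩ := h x hxS
      by_cases hij : i ≤ j
      · have : Q i ≤ Q j := by
          rcases hij.lt_or_eq with h' | h'
          · have := hsep i j h'; omega
          · rw [h']
        have := a4 x hxS (by omega)
        omega
      · have : Q (j + 1) ≤ Q i := by
          rcases (show j + 1 ≤ i by omega).lt_or_eq with h' | h'
          · have := hsep _ _ h'; omega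
          · rw [h']
        have := b4 x hxS (by omega)
        omega
    · have : lo (j + 1) - 1 + 1 = lo (j + 1) := by omega
      simp only [this]; exact b1
  · intro a b ⟨ha0, hab, hno, haS, hbS⟩
    obtain ⟨i, hi1, hi2, hi3, hi4⟩ := h _ haS
    obtain ⟨j, hj1, hj2, hj3, hj4⟩ := h _ hbS
    have hai : Q i < a := by
      by_contra hc
      exact hno a le_rfl hab (hi4 a (by omega))
    have hbj : b < Q j := by
      by_contra hc
      exact hno b hab le_rfl (hj4 b (by omega))
    have hij : i < j := by
      by_contra hc
      rcases (not_lt.mp hc).lt_or_eq with h' | h'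
      · have := hsep _ _ h'; omega
      · subst h'; omega
    have hij2 : j = i + 1 := by
      by_contra hc
      have h1 := hsep i (i + 1) (by omega)
      have h2 := hsep (i + 1) j (by omega)
      exact hno (Q (i + 1)) (by omega) (by omega) (hQ _ (by omega))
    subst hij2
    simp only [Finset.mem_image, Finset.mem_range]
    refine ⟨i, by omega, ?_⟩
    obtain ⟨a1, a2, a3, a4⟩ := hhi i (by omega)
    obtain ⟨b1, b2, b3, b4⟩ := hlo (i + 1) (by omega)
    have hs := hsep i (i + 1) (by omega)
    have e1 := a4 _ haS (by omega)
    have e2 := b4 _ hbS (by omega)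
    have e3 : ¬ (a ≤ hi i) := fun hc => hno _ hc (by omega) a1
    have e4 : ¬ (lo (i + 1) ≤ b) := fun hc => hno _ (by omega) hc b1
    ext <;> simp only <;> omega

end Gaps

section Bip

/-- Interval colorings of a bipartite graph given by a relation. -/
def BCol {L R : Type} (A : L → R → Prop) (f : L → R → ℤ) : Prop :=
  (∀ l r r', A l r → A l r' → f l r = f l r' → r = r') ∧
  (∀ r l l', A l r → A l' r → f l r = f l' r → l = l') ∧
  (∀ l r r' y, A l r → A l r' → f l r ≤ y → y ≤ f l r' → ∃ s, A l s ∧ f l s = y) ∧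
  (∀ r l l' y, A l r → A l' r → f l r ≤ y → y ≤ f l' r → ∃ s, A s r ∧ f s r = y)

/-- The bipartite graph given by a relation, on an arbitrary vertex type. -/
def BG {L R V : Type} (A : L → R → Prop) (e : L ⊕ R ≃ V) : SimpleGraph V where
  Adj a b := ∃ l r, A l r ∧ ((a = e (.inl l) ∧ b = e (.inr r)) ∨
    (a = e (.inr r) ∧ b = e (.inl l)))
  symm := ⟨by
    rintro a b ⟨l, r, h, h'⟩
    exact ⟨l, r, h, by tauto⟩⟩
  loopless := ⟨by
    rintro a ⟨l, r, h, ⟨h1, h2⟩ | ⟨h1, h2⟩⟩ <;>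
    · have := e.injective (h1.symm.trans h2); simp at this⟩

variable {L R V : Type} (A : L → R → Prop) (e : L ⊕ R ≃ V)

lemma BG_edge (x : Sym2 V) :
    x ∈ (BG A e).edgeSet ↔ ∃ l r, A l r ∧ x = s(e (.inl l), e (.inr r)) := by
  induction x using Sym2.ind with
  | _ a b =>
    simp only [SimpleGraph.mem_edgeSet, BG, Sym2.eq_iff]

lemma BG_colorable : (BG A e).Colorable 2 := by
  classical
  refine ⟨SimpleGraph.Coloring.mk (fun v => if (e.symm v).isLeft then 0 else 1) ?_⟩
  rintro a b ⟨l, r, h, ⟨h1, h2⟩ | ⟨h1, h2⟩⟩ <;> subst h1 <;> subst h2 <;> simp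

lemma BG_spectrum (T : ℕ) : T ∈ intervalSpectrum (BG A e) ↔
    ∃ f, BCol A f ∧ {x : ℤ | ∃ l r, A l r ∧ f l r = x}.ncard = T := by
  classical
  have key : ∀ l r l' r', s(e (.inl l), e (.inr r)) = s(e (.inl l'), e (.inr r')) ↔
      l = l' ∧ r = r' := by
    intro l r l' r'
    simp
  have hl : ∀ l l' r', e (.inl l) ∈ s(e (.inl l'), e (.inr r')) ↔ l = l' := by
    intro l l' r'; simp
  have hr : ∀ r l' r', e (.inr r) ∈ s(e (.inl l'), e (.inr r')) ↔ r = r' := by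
    intro l l' r'; simp
  constructor
  · rintro ⟨c, ⟨hc1, hc2⟩, hT⟩
    refine ⟨fun l r => c s(e (.inl l), e (.inr r)), ⟨?_, ?_, ?_, ?_⟩, ?_⟩
    · intro l r r' h h' heq
      by_contra hne
      refine hc1 _ ((BG_edge A e _).2 ⟨l, r, h, rfl⟩) _ ((BG_edge A e _).2 ⟨l, r', h', rfl⟩)
        ?_ ⟨e (.inl l), by simp, by simp⟩ heq
      rw [Ne, key]; tauto
    · intro r l l' h h' heq
      by_contra hne
      refine hc1 _ ((BG_edge A e _).2 ⟨l, r, h, rfl⟩) _ ((BG_edge A e _).2 ⟨l', r, h', rfl⟩)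
        ?_ ⟨e (.inr r), by simp, by simp⟩ heq
      rw [Ne, key]; tauto
    · intro l r r' y h h' hy hy'
      obtain ⟨x, hx, hlx, hxy⟩ := hc2 (e (.inl l)) _ y _ hy hy'
        ⟨_, (BG_edge A e _).2 ⟨l, r, h, rfl⟩, by simp, rfl⟩
        ⟨_, (BG_edge A e _).2 ⟨l, r', h', rfl⟩, by simp, rfl⟩
      obtain ⟨l1, r1, h1, rfl⟩ := (BG_edge A e _).1 hx
      rw [hl] at hlx
      subst hlx
      exact ⟨r1, h1, hxy⟩
    · intro r l l' y h h' hy hy'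
      obtain ⟨x, hx, hlx, hxy⟩ := hc2 (e (.inr r)) _ y _ hy hy'
        ⟨_, (BG_edge A e _).2 ⟨l, r, h, rfl⟩, by simp, rfl⟩
        ⟨_, (BG_edge A e _).2 ⟨l', r, h', rfl⟩, by simp, rfl⟩
      obtain ⟨l1, r1, h1, rfl⟩ := (BG_edge A e _).1 hx
      rw [hr] at hlx
      subst hlx
      exact ⟨l1, h1, hxy⟩
    · rw [← hT]
      congr 1
      ext x
      simp only [Set.mem_ofPred_eq, BG_edge]
      constructor
      · rintro ⟨l, r, h, h'⟩; exact ⟨_, ⟨l, r, h, rfl⟩, h'⟩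
      · rintro ⟨_, ⟨l, r, h, rfl⟩, h'⟩; exact ⟨l, r, h, h'⟩
  · rintro ⟨f, ⟨h1, h2, h3, h4⟩, hT⟩
    let c : Sym2 V → ℤ := fun x =>
      if h : ∃ p : L × R, x = s(e (.inl p.1), e (.inr p.2)) then f h.choose.1 h.choose.2 else 0
    have hc : ∀ l r, c s(e (.inl l), e (.inr r)) = f l r := by
      intro l r
      have h : ∃ p : L × R, s(e (.inl l), e (.inr r)) = s(e (.inl p.1), e (.inr p.2)) :=
        ⟨(l, r), rfl⟩
      simp only [c, dif_pos h]
      have := (key _ _ _ _).1 h.choose_spec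
      rw [← this.1, ← this.2]
    refine ⟨c, ⟨?_, ?_⟩, ?_⟩
    · intro x hx y hy hne ⟨v, hvx, hvy⟩ heq
      obtain ⟨l, r, h, rfl⟩ := (BG_edge A e _).1 hx
      obtain ⟨l', r', h', rfl⟩ := (BG_edge A e _).1 hy
      rw [hc, hc] at heq
      obtain ⟨w, rfl⟩ := e.surjective v
      rcases w with w | w
      · rw [hl] at hvx hvy
        subst hvx; subst hvy
        exact hne (by rw [h1 _ _ _ h h' heq])
      · rw [hr] at hvx hvy
        subst hvx; subst hvy
        exact hne (by rw [h2 _ _ _ h h' heq])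
    · rintro v x y z hxy hyz ⟨e1, he1, hv1, rfl⟩ ⟨e2, he2, hv2, rfl⟩
      obtain ⟨l, r, h, rfl⟩ := (BG_edge A e _).1 he1
      obtain ⟨l', r', h', rfl⟩ := (BG_edge A e _).1 he2
      rw [hc] at hxy hyz
      obtain ⟨w, rfl⟩ := e.surjective v
      rcases w with w | w
      · rw [hl] at hv1 hv2
        subst hv1; subst hv2
        obtain ⟨s, hs, hs'⟩ := h3 _ _ _ y h h' hxy hyz
        exact ⟨_, (BG_edge A e _).2 ⟨_, s, hs, rfl⟩, by simp, by rw [hc, hs']⟩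
      · rw [hr] at hv1 hv2
        subst hv1; subst hv2
        obtain ⟨s, hs, hs'⟩ := h4 _ _ _ y h h' hxy hyz
        exact ⟨_, (BG_edge A e _).2 ⟨s, _, hs, rfl⟩, by simp, by rw [hc, hs']⟩
    · rw [← hT]
      congr 1
      ext x
      simp only [Set.mem_ofPred_eq, BG_edge]
      constructor
      · rintro ⟨_, ⟨l, r, h, rfl⟩, h'⟩; exact ⟨l, r, h, by rw [← h', hc]⟩
      · rintro ⟨l, r, h, h'⟩; exact ⟨_, ⟨l, r, h, rfl⟩, by rw [hc, h']⟩

end Bip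

section Star

lemma star_up (q r : ℕ) (B : Fin q → ℤ) (C : Fin r → ℤ)
    (hB : Function.Injective B) (hC : Function.Injective C)
    (I : Set ℤ) (hI : I = Set.range B ∪ Set.range C)
    (hconv : ∀ a ∈ I, ∀ b ∈ I, ∀ y, a ≤ y → y ≤ b → y ∈ I)
    (i : Fin q) (hup : ∀ c, B i < C c) :
    Set.Icc (B i) (B i + r) ⊆ I ∧ ∀ e ∈ I, B i - q ≤ e ∧ e ≤ B i + q + r := by
  classical
  have hBi : B i ∈ I := by rw [hI]; left; exact ⟨i, rfl⟩
  constructor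
  · have : ∃ e ∈ I, B i + r ≤ e := by
      by_contra hc
      push Not at hc
      have hsub : insert (B i) (Finset.univ.image C) ⊆ Finset.Ico (B i) (B i + r) := by
        intro x hx
        simp only [Finset.mem_insert, Finset.mem_image, Finset.mem_univ, true_and] at hx
        rw [Finset.mem_Ico]
        rcases hx with rfl | ⟨c, rfl⟩
        · exact ⟨le_rfl, hc _ hBi⟩
        · exact ⟨(hup c).le, hc _ (by rw [hI]; right; exact ⟨c, rfl⟩)⟩
      have := Finset.card_le_card hsub
      rw [Finset.card_insert_of_notMem, Finset.card_image_of_injective _ hC] at this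
      · simp at this
      · simp only [Finset.mem_image, Finset.mem_univ, true_and, not_exists]
        intro c hc; have := hup c; omega
    obtain ⟨e, he, hle⟩ := this
    intro y hy
    exact hconv _ hBi _ he y hy.1 (hy.2.trans hle)
  · intro e he
    constructor
    · by_contra hc
      push Not at hc
      have hsub : Finset.Icc e (B i) ⊆ Finset.univ.image B := by
        intro y hy
        rw [Finset.mem_Icc] at hy
        have := hconv _ he _ hBi y hy.1 hy.2
        rw [hI] at this
        rcases this with ⟨c, rfl⟩ | ⟨c, rfl⟩
        · simp
        · have := hup c; omega
      have := Finset.card_le_card hsub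
      rw [Finset.card_image_of_injective _ hB] at this
      simp at this
      omega
    · by_contra hc
      push Not at hc
      have hsub : Finset.Icc (B i) e ⊆ Finset.univ.image B ∪ Finset.univ.image C := by
        intro y hy
        rw [Finset.mem_Icc] at hy
        have := hconv _ hBi _ he y hy.1 hy.2
        rw [hI] at this
        simpa using this
      have := (Finset.card_le_card hsub).trans (Finset.card_union_le _ _)
      rw [Finset.card_image_of_injective _ hB, Finset.card_image_of_injective _ hC] at this
      simp at this
      omega

lemma star_down (q r : ℕ) (B : Fin q → ℤ) (C : Fin r → ℤ)
    (hB : Function.Injective B) (hC : Function.Injective C)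
    (I : Set ℤ) (hI : I = Set.range B ∪ Set.range C)
    (hconv : ∀ a ∈ I, ∀ b ∈ I, ∀ y, a ≤ y → y ≤ b → y ∈ I)
    (i : Fin q) (hup : ∀ c, C c < B i) :
    Set.Icc (B i - r) (B i) ⊆ I ∧ ∀ e ∈ I, B i - q - r ≤ e ∧ e ≤ B i + q := by
  have := star_up q r (fun i => - B i) (fun i => - C i)
    (fun a b h => hB (neg_injective h)) (fun a b h => hC (neg_injective h))
    {x | -x ∈ I} (by
      ext x; subst hI
      simp only [Set.mem_ofPred_eq, Set.mem_union, Set.mem_range]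
      simp only [neg_eq_iff_eq_neg (a := B _), neg_eq_iff_eq_neg (a := C _)])
    (fun a ha b hb y h1 h2 => hconv _ hb _ ha (-y) (by omega) (by omega)) i
    (fun c => by have := hup c; omega)
  obtain ⟨h1, h2⟩ := this
  constructor
  · intro y hy
    have := @h1 (-y) (by simp only [Set.mem_Icc] at hy ⊢; omega)
    simpa using this
  · intro e he
    have := h2 (-e) (by simpa using he)
    omega

lemma star_bad (q r : ℕ) (B : Fin q → ℤ) (C W : Fin r → ℤ)
    (hB : Function.Injective B) (hC : Function.Injective C) (hW : Function.Injective W)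
    (hBC : ∀ i c, B i ≠ C c)
    (hconv : ∀ a b y, W a ≤ y → y ≤ W b → ∃ c, W c = y)
    (hCW : ∀ c, |C c - W c| ≤ 1) :
    (Finset.univ.filter (fun i => ∃ a b, C a < B i ∧ B i < C b)).card ≤ 2 := by
  classical
  rcases Nat.eq_zero_or_pos r with rfl | hr
  · rw [Finset.filter_false_of_mem]
    · simp
    · rintro i - ⟨a, -⟩; exact a.elim0
  have hne : (Finset.univ : Finset (Fin r)).Nonempty := ⟨⟨0, hr⟩, Finset.mem_univ _⟩
  obtain ⟨u, -, hu⟩ := Finset.exists_min_image Finset.univ C hne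
  obtain ⟨v, -, hv⟩ := Finset.exists_max_image Finset.univ C hne
  have hd : W v - W u ≤ r - 1 := by
    by_contra hc
    have hsub : Finset.Icc (W u) (W v) ⊆ Finset.univ.image W := by
      intro y hy
      rw [Finset.mem_Icc] at hy
      obtain ⟨c, rfl⟩ := hconv _ _ y hy.1 hy.2
      simp
    have := Finset.card_le_card hsub
    rw [Finset.card_image_of_injective _ hW] at this
    simp at this
    omega
  have h1 := abs_le.1 (hCW u)
  have h2 := abs_le.1 (hCW v)
  set F := Finset.univ.filter (fun i => ∃ a b, C a < B i ∧ B i < C b) with hF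
  have hsub : F.image B ∪ Finset.univ.image C ⊆ Finset.Icc (C u) (C v) := by
    intro x hx
    rw [Finset.mem_Icc]
    simp only [hF, Finset.mem_union, Finset.mem_image, Finset.mem_filter, Finset.mem_univ,
      true_and] at hx
    rcases hx with ⟨i, ⟨a, b, ha, hb⟩, rfl⟩ | ⟨c, rfl⟩
    · exact ⟨(hu a (Finset.mem_univ _)).trans ha.le, hb.le.trans (hv b (Finset.mem_univ _))⟩
    · exact ⟨hu c (Finset.mem_univ _), hv c (Finset.mem_univ _)⟩
  have := Finset.card_le_card hsub
  rw [Finset.card_union_of_disjoint, Finset.card_image_of_injective _ hB,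
    Finset.card_image_of_injective _ hC] at this
  · simp at this
    omega
  · rw [Finset.disjoint_left]
    intro x hx hx'
    simp only [Finset.mem_image, Finset.mem_univ, true_and] at hx hx'
    obtain ⟨i, -, rfl⟩ := hx
    obtain ⟨c, hc⟩ := hx'
    exact hBC i c hc.symm

end Star

section Cluster

lemma ncard_Icc_int (a b : ℤ) : (Set.Icc a b).ncard = (b + 1 - a).toNat := by
  rw [← Finset.coe_Icc, Set.ncard_coe_finset, Int.card_Icc]

lemma cluster_up (k D q : ℕ) (K : Set ℤ) (hK : K.Finite) (β : Fin (k + 2) → ℤ)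
    (hβ : ∀ i j, β i - β j ≤ k + 1) (N : Fin (k + 2) → Set ℤ)
    (hN : ∀ e ∈ K, ∃ j, e ∈ N j)
    (h : ∀ j : Fin (k + 2),
      (Set.Icc (β j) (β j + (j * D : ℕ)) ⊆ K ∧
        ∀ e ∈ N j, β j - q ≤ e ∧ e ≤ β j + q + (j * D : ℕ)) ∨
      (Set.Icc (β j - (j * D : ℕ)) (β j) ⊆ K ∧
        ∀ e ∈ N j, β j - q - (j * D : ℕ) ≤ e ∧ e ≤ β j + q))
    (hlast : Set.Icc (β (Fin.last _)) (β (Fin.last _) + ((k + 1) * D : ℕ)) ⊆ K ∧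
        ∀ e ∈ N (Fin.last _), β (Fin.last _) - q ≤ e ∧
          e ≤ β (Fin.last _) + q + ((k + 1) * D : ℕ)) :
    ∃ j, j ≤ k ∧ (k + 1) * D + j * D ≤ K.ncard + k ∧
      K.ncard ≤ (k + 1) * D + j * D + 2 * (q + k + 1) + 1 := by
  classical
  let P : Fin (k + 2) → Prop := fun j => j ≠ Fin.last _ ∧
      (Set.Icc (β j - (j * D : ℕ)) (β j) ⊆ K ∧
        ∀ e ∈ N j, β j - q - (j * D : ℕ) ≤ e ∧ e ≤ β j + q)
  have h0 : P 0 := by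
    refine ⟨by simp [Fin.ext_iff], ?_⟩
    rcases h 0 with h | h
    · simpa using h
    · exact h
  obtain ⟨j, hjP, hjmax⟩ := Finset.exists_max_image (Finset.univ.filter P) (fun j => j)
    ⟨0, by simp [h0]⟩
  simp only [Finset.mem_filter, Finset.mem_univ, true_and] at hjP hjmax
  have hjl := hjP.1
  have hjk : (j : ℕ) ≤ k := by
    have := j.2
    have : (j : ℕ) ≠ k + 1 := fun hc => hjl (Fin.ext (by simp [hc]))
    omega
  refine ⟨j, hjk, ?_, ?_⟩
  · have hsub := Set.union_subset hlast.1 hjP.2.1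
    have h1 := Set.ncard_le_ncard hsub hK
    have h2 := Set.ncard_union_add_ncard_inter
      (Set.Icc (β (Fin.last _)) (β (Fin.last _) + ((k + 1) * D : ℕ)))
      (Set.Icc (β j - (j * D : ℕ)) (β j)) (Set.finite_Icc _ _) (Set.finite_Icc _ _)
    have h3 : (Set.Icc (β (Fin.last _)) (β (Fin.last _) + ((k + 1) * D : ℕ)) ∩
      (Set.Icc (β j - (j * D : ℕ)) (β j))).ncard ≤
        (Set.Icc (β (Fin.last _)) (β j)).ncard :=
      Set.ncard_le_ncard (fun x hx => ⟨hx.1.1, hx.2.2⟩) (Set.finite_Icc _ _)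
    rw [ncard_Icc_int] at h3
    rw [ncard_Icc_int, ncard_Icc_int] at h2
    have := hβ j (Fin.last _)
    generalize (k + 1) * D = X at *
    generalize (j : ℕ) * D = Y at *
    omega
  · have hsub : K ⊆ Set.Icc (β j - (j * D : ℕ) - q - k - 1)
        (β j + ((k + 1) * D : ℕ) + q + k + 1) := by
      intro e he
      obtain ⟨i, hi⟩ := hN e he
      have e1 := hβ i j
      have e2 := hβ j i
      have hle : (i : ℕ) * D ≤ (k + 1) * D :=
        Nat.mul_le_mul_right _ (by have := i.2; omega)
      by_cases hPi : P i
      · have hm : i ≤ j := hjmax i hPi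
        have hm2 : (i : ℕ) * D ≤ (j : ℕ) * D := Nat.mul_le_mul_right _ hm
        have := hPi.2.2 e hi
        rw [Set.mem_Icc]
        generalize (k + 1) * D = X at *
        generalize (j : ℕ) * D = Y at *
        generalize (i : ℕ) * D = Z at *
        omega
      · have : ∀ e ∈ N i, β i - q ≤ e ∧ e ≤ β i + q + ((k + 1) * D : ℕ) := by
          by_cases hil : i = Fin.last _
          · rw [hil]; exact hlast.2
          · rcases h i with h' | h'
            · intro e he
              have := h'.2 e he
              omega
            · exact absurd ⟨hil, h'⟩ hPi
        have := this e hi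
        rw [Set.mem_Icc]
        generalize (k + 1) * D = X at *
        generalize (j : ℕ) * D = Y at *
        omega
    have := Set.ncard_le_ncard hsub (Set.finite_Icc _ _)
    rw [ncard_Icc_int] at this
    generalize (k + 1) * D = X at *
    generalize (j : ℕ) * D = Y at *
    omega

lemma cluster (k D q : ℕ) (K : Set ℤ) (hK : K.Finite) (β : Fin (k + 2) → ℤ)
    (hβ : ∀ i j, β i - β j ≤ k + 1) (N : Fin (k + 2) → Set ℤ)
    (hN : ∀ e ∈ K, ∃ j, e ∈ N j)
    (h : ∀ j : Fin (k + 2),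
      (Set.Icc (β j) (β j + (j * D : ℕ)) ⊆ K ∧
        ∀ e ∈ N j, β j - q ≤ e ∧ e ≤ β j + q + (j * D : ℕ)) ∨
      (Set.Icc (β j - (j * D : ℕ)) (β j) ⊆ K ∧
        ∀ e ∈ N j, β j - q - (j * D : ℕ) ≤ e ∧ e ≤ β j + q)) :
    ∃ j, j ≤ k ∧ (k + 1) * D + j * D ≤ K.ncard + k ∧
      K.ncard ≤ (k + 1) * D + j * D + 2 * (q + k + 1) + 1 := by
  rcases h (Fin.last _) with hl | hl
  · exact cluster_up k D q K hK β hβ N hN h (by simpa only [Fin.val_last] using hl)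
  · have hncard : (Neg.neg '' K).ncard = K.ncard := Set.ncard_image_of_injective _ neg_injective
    rw [← hncard]
    have hmem : ∀ (K : Set ℤ) x, x ∈ Neg.neg '' K ↔ -x ∈ K := by simp
    have hsw1 : ∀ (j : Fin (k + 2)) (n : ℕ),
        (Set.Icc (β j - n) (β j) ⊆ K ∧ ∀ e ∈ N j, β j - q - n ≤ e ∧ e ≤ β j + q) →
        (Set.Icc (-β j) (-β j + n) ⊆ Neg.neg '' K ∧
          ∀ e ∈ Neg.neg '' (N j), -β j - q ≤ e ∧ e ≤ -β j + q + n) := by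
      rintro j n ⟨h1, h2⟩
      constructor
      · intro y hy
        rw [hmem]
        apply h1
        simp only [Set.mem_Icc] at hy ⊢
        omega
      · intro e he
        rw [hmem] at he
        have := h2 _ he
        omega
    have hsw2 : ∀ (j : Fin (k + 2)) (n : ℕ),
        (Set.Icc (β j) (β j + n) ⊆ K ∧ ∀ e ∈ N j, β j - q ≤ e ∧ e ≤ β j + q + n) →
        (Set.Icc (-β j - n) (-β j) ⊆ Neg.neg '' K ∧
          ∀ e ∈ Neg.neg '' (N j), -β j - q - n ≤ e ∧ e ≤ -β j + q) := by
      rintro j n ⟨h1, h2⟩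
      constructor
      · intro y hy
        rw [hmem]
        apply h1
        simp only [Set.mem_Icc] at hy ⊢
        omega
      · intro e he
        rw [hmem] at he
        have := h2 _ he
        omega
    refine cluster_up k D q (Neg.neg '' K) (hK.image _) (fun j => - β j) ?_
      (fun j => Neg.neg '' (N j)) ?_ ?_ ?_
    · intro i j; have := hβ j i; omega
    · intro e he
      rw [hmem] at he
      obtain ⟨j, hj⟩ := hN _ he
      exact ⟨j, (hmem _ _).2 hj⟩
    · intro j
      rcases h j with h | h
      · right; exact hsw2 j _ h
      · left; exact hsw1 j _ h
    · have := hsw1 (Fin.last _) _ hl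
      simpa only [Fin.val_last] using this

end Cluster

section Construction

/-- The adjacency relation of the construction: hubs, cluster vertices and isolated edges
on the left; shared vertices, cluster neighbours and isolated edges on the right. -/
def GA (k D q t : ℕ) : (Fin (k + 2) ⊕ Fin (k + 2) ⊕ Fin t) →
    (Fin q ⊕ (Σ j : Fin (k + 2), Fin (j * D)) ⊕ Fin t) → Prop
  | .inl _, .inl _ => True
  | .inl j, .inr (.inl p) => p.1 = j
  | .inr (.inl j), .inr (.inl p) => p.1 = j
  | .inr (.inr a), .inr (.inr b) => a = b
  | _, _ => False

/-- The colors used on the non-isolated edges. -/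
def coreK {k D q t : ℕ} (f : (Fin (k + 2) ⊕ Fin (k + 2) ⊕ Fin t) →
    (Fin q ⊕ (Σ j : Fin (k + 2), Fin (j * D)) ⊕ Fin t) → ℤ) : Set ℤ :=
  {x | (∃ j i, f (.inl j) (.inl i) = x) ∨
    (∃ j c, f (.inl j) (.inr (.inl ⟨j, c⟩)) = x) ∨
    (∃ j c, f (.inr (.inl j)) (.inr (.inl ⟨j, c⟩)) = x)}

variable {k D q t : ℕ} (f : (Fin (k + 2) ⊕ Fin (k + 2) ⊕ Fin t) →
    (Fin q ⊕ (Σ j : Fin (k + 2), Fin (j * D)) ⊕ Fin t) → ℤ)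

lemma coreK_finite : (coreK f).Finite := by
  have : coreK f ⊆ Set.range (fun p : (Fin (k + 2) ⊕ Fin (k + 2) ⊕ Fin t) ×
    (Fin q ⊕ (Σ j : Fin (k + 2), Fin (j * D)) ⊕ Fin t) => f p.1 p.2) := by
    rintro x (⟨j, i, rfl⟩ | ⟨j, c, rfl⟩ | ⟨j, c, rfl⟩)
    · exact ⟨(.inl j, .inl i), rfl⟩
    · exact ⟨(.inl j, .inr (.inl ⟨j, c⟩)), rfl⟩
    · exact ⟨(.inr (.inl j), .inr (.inl ⟨j, c⟩)), rfl⟩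
  exact (Set.finite_range _).subset this

lemma colors_eq : {x : ℤ | ∃ l r, GA k D q t l r ∧ f l r = x} =
    coreK f ∪ Set.range (fun a : Fin t => f (.inr (.inr a)) (.inr (.inr a))) := by
  ext x
  constructor
  · rintro ⟨l | l | l, r | ⟨r, c⟩ | r, h, rfl⟩ <;> simp only [GA] at h
    · left; left; exact ⟨_, _, rfl⟩
    · subst h; left; right; left; exact ⟨_, _, rfl⟩
    · subst h; left; right; right; exact ⟨_, _, rfl⟩
    · subst h; right; exact ⟨_, rfl⟩
  · rintro ((⟨j, i, rfl⟩ | ⟨j, c, rfl⟩ | ⟨j, c, rfl⟩) | ⟨a, rfl⟩)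
    · exact ⟨.inl j, .inl i, by simp [GA], rfl⟩
    · exact ⟨.inl j, .inr (.inl ⟨j, c⟩), by simp [GA], rfl⟩
    · exact ⟨.inr (.inl j), .inr (.inl ⟨j, c⟩), by simp [GA], rfl⟩
    · exact ⟨.inr (.inr a), .inr (.inr a), by simp [GA], rfl⟩

lemma colors_bounds : (coreK f).ncard ≤ {x : ℤ | ∃ l r, GA k D q t l r ∧ f l r = x}.ncard ∧
    {x : ℤ | ∃ l r, GA k D q t l r ∧ f l r = x}.ncard ≤ (coreK f).ncard + t := by
  rw [colors_eq]
  constructor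
  · exact Set.ncard_le_ncard Set.subset_union_left ((coreK_finite f).union (Set.finite_range _))
  · refine (Set.ncard_union_le _ _).trans ?_
    gcongr
    rw [← Set.image_univ]
    refine (Set.ncard_image_le Set.finite_univ).trans ?_
    simp

lemma smear (hq : 0 < q) (hf : BCol (GA k D q t) f) (T : ℕ) (h1 : (coreK f).ncard ≤ T)
    (h2 : T ≤ (coreK f).ncard + t) :
    ∃ g, BCol (GA k D q t) g ∧ {x : ℤ | ∃ l r, GA k D q t l r ∧ g l r = x}.ncard = T := by
  classical
  obtain ⟨M, hM⟩ := (coreK_finite f).bddAbove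
  have hx0 : f (.inl 0) (.inl ⟨0, hq⟩) ∈ coreK f := Or.inl ⟨_, _, rfl⟩
  set x0 := f (.inl 0) (.inl ⟨0, hq⟩) with hx0'
  let E : ℕ → ℤ := fun a => if a < T - (coreK f).ncard then M + 1 + a else x0
  let g : (Fin (k + 2) ⊕ Fin (k + 2) ⊕ Fin t) →
    (Fin q ⊕ (Σ j : Fin (k + 2), Fin (j * D)) ⊕ Fin t) → ℤ := fun l r =>
    match l with
    | .inr (.inr a) => E a
    | .inl j => f (.inl j) r
    | .inr (.inl j) => f (.inr (.inl j)) r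
  have hcore : coreK g = coreK f := rfl
  refine ⟨g, ?_, ?_⟩
  · obtain ⟨c1, c2, c3, c4⟩ := hf
    refine ⟨?_, ?_, ?_, ?_⟩
    · rintro (l | l | l) r r' h h' heq
      · exact c1 _ _ _ h h' heq
      · exact c1 _ _ _ h h' heq
      · rcases r with r | r | r <;> rcases r' with r' | r' | r' <;> simp only [GA] at h h'
        rw [← h, ← h']
    · rintro r (l | l | l) (l' | l' | l') h h' heq
      · exact c2 _ _ _ h h' heq
      · exact c2 _ _ _ h h' heq
      · rcases r with r | r | r <;> simp only [GA] at h h'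
      · exact c2 _ _ _ h h' heq
      · exact c2 _ _ _ h h' heq
      · rcases r with r | r | r <;> simp only [GA] at h h'
      · rcases r with r | r | r <;> simp only [GA] at h h'
      · rcases r with r | r | r <;> simp only [GA] at h h'
      · rcases r with r | r | r <;> simp only [GA] at h h'
        rw [h, h']
    · rintro (l | l | l) r r' y h h' hy hy'
      · exact c3 _ _ _ _ h h' hy hy'
      · exact c3 _ _ _ _ h h' hy hy'
      · exact ⟨r, h, le_antisymm hy hy'⟩
    · intro r l l' y h h' hy hy'
      rcases r with r | r | r
      · rcases l with l | l | l <;> rcases l' with l' | l' | l' <;> simp only [GA] at h h'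
        obtain ⟨s, hs, hs'⟩ := c4 (.inl r) (.inl l) (.inl l') y (by simp [GA]) (by simp [GA]) hy hy'
        rcases s with s | s | s <;> simp only [GA] at hs
        exact ⟨.inl s, by simp [GA], hs'⟩
      · have hh : ∀ s, GA k D q t s (.inr (.inl r)) → g s (.inr (.inl r)) = f s (.inr (.inl r)) := by
          rintro (s | s | s) hs
          · rfl
          · rfl
          · simp only [GA] at hs
        rw [hh _ h] at hy
        rw [hh _ h'] at hy'
        obtain ⟨s, hs, hs'⟩ := c4 _ _ _ _ h h' hy hy'
        exact ⟨s, hs, by rw [hh _ hs, hs']⟩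
      · rcases l with l | l | l <;> rcases l' with l' | l' | l' <;> simp only [GA] at h h'
        subst h; subst h'
        exact ⟨.inr (.inr l'), by simp [GA], le_antisymm hy hy'⟩
  · rw [colors_eq, hcore]
    set n := T - (coreK f).ncard with hn
    have : coreK f ∪ Set.range (fun a : Fin t => g (.inr (.inr a)) (.inr (.inr a))) =
        coreK f ∪ Set.Icc (M + 1) (M + n) := by
      ext x
      constructor
      · rintro (h | ⟨a, rfl⟩)
        · exact Or.inl h
        · change E a ∈ _
          by_cases ha : (a : ℕ) < n
          · rw [show E a = M + 1 + (a : ℕ) from if_pos ha]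
            right
            rw [Set.mem_Icc]; omega
          · rw [show E a = x0 from if_neg ha]
            left; exact hx0
      · rintro (h | h)
        · exact Or.inl h
        · rw [Set.mem_Icc] at h
          right
          refine ⟨⟨(x - (M + 1)).toNat, by omega⟩, ?_⟩
          change E _ = x
          simp only [E]
          rw [if_pos (by omega)]
          omega
    rw [this, Set.ncard_union_eq ?_ (coreK_finite f) (Set.finite_Icc _ _), ncard_Icc_int]
    · omega
    · rw [Set.disjoint_left]
      intro x hx hx'
      have := hM hx
      rw [Set.mem_Icc] at hx'
      omega

lemma core_cluster (hq : q = 2 * (k + 2) + 1) (hf : BCol (GA k D q t) f) :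
    ∃ j, j ≤ k ∧ (k + 1) * D + j * D ≤ (coreK f).ncard + k ∧
      (coreK f).ncard ≤ (k + 1) * D + j * D + 2 * ((q + 1) + k + 1) + 1 := by
  classical
  obtain ⟨c1, c2, c3, c4⟩ := hf
  let B : Fin (k + 2) → Fin q → ℤ := fun j i => f (.inl j) (.inl i)
  let C : (j : Fin (k + 2)) → Fin (j * D) → ℤ := fun j c => f (.inl j) (.inr (.inl ⟨j, c⟩))
  let W : (j : Fin (k + 2)) → Fin (j * D) → ℤ :=
    fun j c => f (.inr (.inl j)) (.inr (.inl ⟨j, c⟩))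
  have hB : ∀ j, Function.Injective (B j) := by
    intro j a b hab
    simpa using c1 (.inl j) (.inl a) (.inl b) (by simp [GA]) (by simp [GA]) hab
  have hC : ∀ j, Function.Injective (C j) := by
    intro j a b hab
    simpa using c1 (.inl j) (.inr (.inl ⟨j, a⟩)) (.inr (.inl ⟨j, b⟩))
      (by simp [GA]) (by simp [GA]) hab
  have hW : ∀ j, Function.Injective (W j) := by
    intro j a b hab
    simpa using c1 (.inr (.inl j)) (.inr (.inl ⟨j, a⟩)) (.inr (.inl ⟨j, b⟩))
      (by simp [GA]) (by simp [GA]) hab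
  have hBC : ∀ j i c, B j i ≠ C j c := by
    intro j i c hab
    simpa using c1 (.inl j) (.inl i) (.inr (.inl ⟨j, c⟩)) (by simp [GA]) (by simp [GA]) hab
  have hWc : ∀ j a b y, W j a ≤ y → y ≤ W j b → ∃ c, W j c = y := by
    intro j a b y h1 h2
    obtain ⟨s, hs, hs'⟩ := c3 (.inr (.inl j)) (.inr (.inl ⟨j, a⟩)) (.inr (.inl ⟨j, b⟩)) y
      (by simp [GA]) (by simp [GA]) h1 h2
    rcases s with s | ⟨s, c⟩ | s <;> simp only [GA] at hs
    subst hs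
    exact ⟨c, hs'⟩
  have hCW : ∀ j c, |C j c - W j c| ≤ 1 := by
    intro j c
    have hs : ∀ s, GA k D q t s (.inr (.inl ⟨j, c⟩)) → s = .inl j ∨ s = .inr (.inl j) := by
      rintro (s | s | s) hs <;> simp only [GA] at hs <;> subst hs <;> simp
    rw [abs_le]
    constructor
    · by_contra hc
      obtain ⟨s, hs1, hs2⟩ := c4 (.inr (.inl ⟨j, c⟩)) (.inl j) (.inr (.inl j)) (C j c + 1)
        (by simp [GA]) (by simp [GA]) (by simp only [C]; omega) (by simp only [C, W] at hc ⊢; omega)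
      rcases hs s hs1 with rfl | rfl
      · simp only [C] at hs2; omega
      · simp only [C, W] at hs2 hc; omega
    · by_contra hc
      obtain ⟨s, hs1, hs2⟩ := c4 (.inr (.inl ⟨j, c⟩)) (.inr (.inl j)) (.inl j) (W j c + 1)
        (by simp [GA]) (by simp [GA]) (by simp only [W]; omega) (by simp only [C, W] at hc ⊢; omega)
      rcases hs s hs1 with rfl | rfl
      · simp only [C, W] at hs2 hc; omega
      · simp only [W] at hs2; omega
  have hBd : ∀ i a b, B a i - B b i ≤ k + 1 := by
    intro i a b
    by_contra hc
    have hsub : Finset.Icc (B b i) (B a i) ⊆ Finset.univ.image (fun j => B j i) := by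
      intro y hy
      rw [Finset.mem_Icc] at hy
      obtain ⟨s, hs1, hs2⟩ := c4 (.inl i) (.inl b) (.inl a) y (by simp [GA]) (by simp [GA])
        hy.1 hy.2
      rcases s with s | s | s <;> simp only [GA] at hs1
      simp only [Finset.mem_image, Finset.mem_univ, true_and]
      exact ⟨s, hs2⟩
    have := (Finset.card_le_card hsub).trans Finset.card_image_le
    simp at this
    omega
  -- a good shared vertex
  have hgood : ∃ i, ∀ j, ¬ ∃ a b, C j a < B j i ∧ B j i < C j b := by
    by_contra hc
    push Not at hc
    have hsub : (Finset.univ : Finset (Fin q)) ⊆ (Finset.univ : Finset (Fin (k + 2))).biUnion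
        (fun j => Finset.univ.filter (fun i => ∃ a b, C j a < B j i ∧ B j i < C j b)) := by
      intro i _
      simp only [Finset.mem_biUnion, Finset.mem_filter, Finset.mem_univ, true_and]
      exact hc i
    have h1 := Finset.card_le_card hsub
    have h2 := Finset.card_biUnion_le_card_mul (Finset.univ : Finset (Fin (k + 2)))
        (fun j => Finset.univ.filter (fun i => ∃ a b, C j a < B j i ∧ B j i < C j b)) 2
        (fun j _ => star_bad q _ (B j) (C j) (W j) (hB j) (hC j) (hW j) (hBC j) (hWc j) (hCW j))
    simp at h1 h2
    omega
  obtain ⟨i, hi⟩ := hgood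
  let I : Fin (k + 2) → Set ℤ := fun j => Set.range (B j) ∪ Set.range (C j)
  have hIK : ∀ j, I j ⊆ coreK f := by
    rintro j _ (⟨i, rfl⟩ | ⟨c, rfl⟩)
    · left; exact ⟨_, _, rfl⟩
    · right; left; exact ⟨_, _, rfl⟩
  have hIc : ∀ j, ∀ a ∈ I j, ∀ b ∈ I j, ∀ y, a ≤ y → y ≤ b → y ∈ I j := by
    have hex : ∀ j, ∀ a, a ∈ I j ↔ ∃ r, GA k D q t (.inl j) r ∧ f (.inl j) r = a := by
      intro j a
      constructor
      · rintro (⟨i, rfl⟩ | ⟨c, rfl⟩)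
        · exact ⟨.inl i, by simp [GA], rfl⟩
        · exact ⟨.inr (.inl ⟨j, c⟩), by simp [GA], rfl⟩
      · rintro ⟨r | ⟨r, c⟩ | r, hr, rfl⟩ <;> simp only [GA] at hr
        · left; exact ⟨_, rfl⟩
        · subst hr; right; exact ⟨_, rfl⟩
    intro j a ha b hb y h1 h2
    rw [hex] at ha hb ⊢
    obtain ⟨r, hr, rfl⟩ := ha
    obtain ⟨r', hr', rfl⟩ := hb
    exact c3 _ _ _ _ hr hr' h1 h2
  refine cluster k D (q + 1) (coreK f) (coreK_finite f) (fun j => B j i) (hBd i)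
    (fun j => {e | ∃ e' ∈ I j, |e' - e| ≤ 1}) ?_ ?_
  · rintro x (⟨j, i, rfl⟩ | ⟨j, c, rfl⟩ | ⟨j, c, rfl⟩)
    · exact ⟨j, B j i, Or.inl ⟨_, rfl⟩, by simp [B]⟩
    · exact ⟨j, C j c, Or.inr ⟨_, rfl⟩, by simp [C]⟩
    · exact ⟨j, C j c, Or.inr ⟨_, rfl⟩, hCW j c⟩
  · intro j
    by_cases hu : ∀ c, B j i < C j c
    · left
      obtain ⟨g1, g2⟩ := star_up q _ (B j) (C j) (hB j) (hC j) (I j) rfl (hIc j) i hu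
      refine ⟨g1.trans (hIK j), ?_⟩
      rintro e ⟨e', he', hee⟩
      have := g2 e' he'
      have := abs_le.1 hee
      push_cast at *
      omega
    · right
      push Not at hu
      obtain ⟨a, ha⟩ := hu
      have ha' : C j a < B j i := lt_of_le_of_ne ha (hBC j i a).symm
      have hd : ∀ c, C j c < B j i := by
        intro c
        by_contra hc
        exact hi j ⟨a, c, ha', lt_of_le_of_ne (not_lt.1 hc) (hBC j i c)⟩
      obtain ⟨g1, g2⟩ := star_down q _ (B j) (C j) (hB j) (hC j) (I j) rfl (hIc j) i hd
      refine ⟨g1.trans (hIK j), ?_⟩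
      rintro e ⟨e', he', hee⟩
      have := g2 e' he'
      have := abs_le.1 hee
      push_cast at *
      omega

/-- The explicit coloring in which exactly the cluster of hub `j` lies above. -/
def col (k D q t : ℕ) (j : ℕ) : (Fin (k + 2) ⊕ Fin (k + 2) ⊕ Fin t) →
    (Fin q ⊕ (Σ j : Fin (k + 2), Fin (j * D)) ⊕ Fin t) → ℤ
  | .inl a, .inl i => (a : ℕ) + (i : ℕ)
  | .inl a, .inr (.inl p) =>
      if (a : ℕ) = j then ((a : ℕ) : ℤ) + q + (p.2 : ℕ) else ((a : ℕ) : ℤ) - 1 - (p.2 : ℕ)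
  | .inr (.inl a), .inr (.inl p) =>
      if (a : ℕ) = j then ((a : ℕ) : ℤ) + q + (p.2 : ℕ) + 1 else ((a : ℕ) : ℤ) - 2 - (p.2 : ℕ)
  | _, _ => 0

lemma col_BCol (j : ℕ) : BCol (GA k D q t) (col k D q t j) := by
  refine ⟨?_, ?_, ?_, ?_⟩
  · rintro (l | l | l) (r | ⟨r, c⟩ | r) (r' | ⟨r', c'⟩ | r') h h' heq <;>
      simp only [GA] at h h' <;> simp only [col] at heq
    · congr 1; ext; omega
    · exfalso; have := r.2; split_ifs at heq <;> omega
    · exfalso; have := r'.2; split_ifs at heq <;> omega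
    · subst h; subst h'
      congr 3; ext; split_ifs at heq <;> omega
    · subst h; subst h'
      congr 3; ext; split_ifs at heq <;> omega
    · rw [← h, ← h']
  · rintro (r | ⟨r, c⟩ | r) (l | l | l) (l' | l' | l') h h' heq <;>
      simp only [GA] at h h' <;> simp only [col] at heq
    · congr 1; ext; omega
    · rw [← h, ← h']
    · exfalso; subst h; subst h'; split_ifs at heq <;> omega
    · exfalso; subst h; subst h'; split_ifs at heq <;> omega
    · rw [← h, ← h']
    · rw [h, h']
  · rintro (l | l | l) r r' y h h' hy hy'
    · by_cases hyB : (l : ℤ) ≤ y ∧ y < l + q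
      · refine ⟨.inl ⟨(y - l).toNat, by omega⟩, by simp [GA], ?_⟩
        simp only [col]; omega
      · by_cases hl : (l : ℕ) = j
        · have hlow : (l : ℤ) ≤ y := by
            refine le_trans ?_ hy
            rcases r with r | ⟨r, c⟩ | r <;> simp only [GA] at h <;> simp only [col]
            · omega
            · rw [if_pos hl]; omega
          have hup : y < l + q + (l * D : ℕ) := by
            refine lt_of_le_of_lt hy' ?_
            rcases r' with r | ⟨r, c⟩ | r <;> simp only [GA] at h' <;> simp only [col]
            · have := r.2; omega
            · subst h'; rw [if_pos hl]; have := c.2; omega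
          refine ⟨.inr (.inl ⟨l, ⟨(y - l - q).toNat, by omega⟩⟩), by simp [GA], ?_⟩
          simp only [col]; rw [if_pos hl]; omega
        · have hlow : (l : ℤ) - (l * D : ℕ) ≤ y := by
            refine le_trans ?_ hy
            rcases r with r | ⟨r, c⟩ | r <;> simp only [GA] at h <;> simp only [col]
            · omega
            · subst h; rw [if_neg hl]; have := c.2; omega
          have hup : y < l + q := by
            refine lt_of_le_of_lt hy' ?_
            rcases r' with r | ⟨r, c⟩ | r <;> simp only [GA] at h' <;> simp only [col]
            · have := r.2; omega
            · rw [if_neg hl]; omega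
          refine ⟨.inr (.inl ⟨l, ⟨(l - 1 - y).toNat, by omega⟩⟩), by simp [GA], ?_⟩
          simp only [col]; rw [if_neg hl]; omega
    · rcases r with r | ⟨r, c⟩ | r <;> simp only [GA] at h
      rcases r' with r' | ⟨r', c'⟩ | r' <;> simp only [GA] at h'
      subst h; subst h'
      simp only [col] at hy hy'
      have := c.2
      have := c'.2
      by_cases hl : (r' : ℕ) = j
      · rw [if_pos hl] at hy hy'
        refine ⟨.inr (.inl ⟨r', ⟨(y - r' - q - 1).toNat, by omega⟩⟩), by simp [GA], ?_⟩
        simp only [col]; rw [if_pos hl]; omega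
      · rw [if_neg hl] at hy hy'
        refine ⟨.inr (.inl ⟨r', ⟨(r' - 2 - y).toNat, by omega⟩⟩), by simp [GA], ?_⟩
        simp only [col]; rw [if_neg hl]; omega
    · refine ⟨r, h, ?_⟩
      rcases r with r | r | r <;> rcases r' with r' | r' | r' <;> simp only [GA] at h h'
      simp only [col] at *
      omega
  · rintro (r | ⟨r, c⟩ | r) (l | l | l) (l' | l' | l') y h h' hy hy' <;>
      simp only [GA] at h h' <;> simp only [col] at hy hy'
    · have := l.2
      have := l'.2
      refine ⟨.inl ⟨(y - r).toNat, by omega⟩, by simp [GA], ?_⟩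
      simp only [col]; omega
    · subst h; subst h'
      exact ⟨.inl r, by simp [GA], by simp only [col]; omega⟩
    · subst h; subst h'
      have : y = col k D q t j (.inl r) (.inr (.inl ⟨r, c⟩)) ∨
          y = col k D q t j (.inr (.inl r)) (.inr (.inl ⟨r, c⟩)) := by
        simp only [col]; split_ifs at * <;> omega
      rcases this with h | h
      · exact ⟨.inl r, by simp [GA], h.symm⟩
      · exact ⟨.inr (.inl r), by simp [GA], h.symm⟩
    · subst h; subst h'
      have : y = col k D q t j (.inl r) (.inr (.inl ⟨r, c⟩)) ∨
          y = col k D q t j (.inr (.inl r)) (.inr (.inl ⟨r, c⟩)) := by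
        simp only [col]; split_ifs at * <;> omega
      rcases this with h | h
      · exact ⟨.inl r, by simp [GA], h.symm⟩
      · exact ⟨.inr (.inl r), by simp [GA], h.symm⟩
    · subst h; subst h'
      exact ⟨.inr (.inl r), by simp [GA], by simp only [col]; omega⟩
    · subst h; subst h'
      exact ⟨.inr (.inr l'), by simp [GA], by simp only [col]; omega⟩

lemma col_card (hq : q = 2 * (k + 2) + 1) (j : ℕ) (hj : j ≤ k) :
    (k + 1) * D + j * D ≤ (coreK (col k D q t j)).ncard ∧
      (coreK (col k D q t j)).ncard ≤ (k + 1) * D + j * D + 2 * ((q + 1) + k + 1) + 1 := by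
  constructor
  · have hsub : Set.Icc ((k : ℤ) + 1 - ((k + 1) * D : ℕ)) k ∪
        Set.Icc ((j : ℤ) + q) (j + q + (j * D : ℕ) - 1) ⊆ coreK (col k D q t j) := by
      rintro x (hx | hx)
      · rw [Set.mem_Icc] at hx
        right; left
        refine ⟨Fin.last _, ⟨(k - x).toNat, ?_⟩, ?_⟩
        · simp only [Fin.val_last]; omega
        · simp only [col, Fin.val_last]
          rw [if_neg (by omega)]
          push_cast
          omega
      · rw [Set.mem_Icc] at hx
        right; left
        refine ⟨⟨j, by omega⟩, ⟨(x - j - q).toNat, ?_⟩, ?_⟩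
        · simp only; omega
        · simp only [col]
          rw [if_pos trivial]
          omega
    have h1 := Set.ncard_le_ncard hsub (coreK_finite _)
    rw [Set.ncard_union_eq ?_ (Set.finite_Icc _ _) (Set.finite_Icc _ _), ncard_Icc_int,
      ncard_Icc_int] at h1
    · generalize (k + 1) * D = X at *
      generalize j * D = Y at *
      omega
    · rw [Set.disjoint_left]
      intro x hx hx'
      rw [Set.mem_Icc] at hx hx'
      omega
  · have hsub : coreK (col k D q t j) ⊆ Set.Icc (-1 - (((k + 1) * D : ℕ) : ℤ))
        (k + 1 + q + (j * D : ℕ)) := by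
      have hle : ∀ a : Fin (k + 2), (a : ℕ) * D ≤ (k + 1) * D := fun a =>
        Nat.mul_le_mul_right _ (by have := a.2; omega)
      rintro x (⟨a, i, rfl⟩ | ⟨a, c, rfl⟩ | ⟨a, c, rfl⟩) <;> rw [Set.mem_Icc] <;> simp only [col]
      · have := a.2
        have := i.2
        constructor <;> omega
      all_goals
        have h1 := a.2
        have h2 := c.2
        have h3 := hle a
        by_cases ha : (a : ℕ) = j
        · rw [if_pos ha]
          have h4 : (a : ℕ) * D = j * D := by rw [ha]
          generalize (k + 1) * D = X at *
          generalize j * D = Y at *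
          generalize (a : ℕ) * D = Z at *
          omega
        · rw [if_neg ha]
          generalize (k + 1) * D = X at *
          generalize j * D = Y at *
          generalize (a : ℕ) * D = Z at *
          omega
    have h1 := Set.ncard_le_ncard hsub (Set.finite_Icc _ _)
    rw [ncard_Icc_int] at h1
    generalize (k + 1) * D = X at *
    generalize j * D = Y at *
    omega

end Construction

/-- For all `k, d` there is a finite bipartite interval colorable graph whose interval
spectrum has exactly `k` gaps, each of size at least `d`. -/
theorem stmt14 (k d : ℕ) :
    ∃ (n : ℕ) (G : SimpleGraph (Fin n)), G.Colorable 2 ∧ IntervalColorable G ∧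
      ∃ gaps : Finset (ℕ × ℕ), gaps.card = k ∧
        (∀ p ∈ gaps, IsGap (intervalSpectrum G) p.1 p.2 ∧ d ≤ p.2 + 1 - p.1) ∧
        (∀ a b : ℕ, IsGap (intervalSpectrum G) a b → (a, b) ∈ gaps) := by
  obtain ⟨q, hq⟩ : ∃ q, q = 2 * (k + 2) + 1 := ⟨_, rfl⟩
  obtain ⟨t, ht⟩ : ∃ t, t = k + 2 * ((q + 1) + k + 1) + 1 := ⟨_, rfl⟩
  obtain ⟨D, hD⟩ : ∃ D, D = 2 * t + d + 2 := ⟨_, rfl⟩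
  let e := Fintype.equivFin ((Fin (k + 2) ⊕ Fin (k + 2) ⊕ Fin t) ⊕
    (Fin q ⊕ (Σ j : Fin (k + 2), Fin (j * D)) ⊕ Fin t))
  let Q : ℕ → ℕ := fun j => (k + 1) * D + j * D + 2 * ((q + 1) + k + 1) + 1
  have hQ : ∀ j, j ≤ k → Q j ∈ intervalSpectrum (BG (GA k D q t) e) := by
    intro j hj
    rw [BG_spectrum]
    have h := col_card (D := D) (t := t) hq j hj
    exact smear _ (by omega) (col_BCol j) _ h.2 (by simp only [Q]; omega)
  refine ⟨_, BG (GA k D q t) e, BG_colorable _ _, ?_, ?_⟩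
  · obtain ⟨c, hc, -⟩ := hQ 0 (by omega)
    exact ⟨c, hc⟩
  · refine gaps_of_clusters _ k d t Q ?_ hQ ?_
    · intro i j hij
      have : (i + 1) * D ≤ j * D := Nat.mul_le_mul_right _ hij
      rw [Nat.add_mul] at this
      simp only [Q]
      omega
    · intro T hT
      rw [BG_spectrum] at hT
      obtain ⟨f, hf, rfl⟩ := hT
      obtain ⟨j, hj, h1, h2⟩ := core_cluster f hq hf
      have h3 := colors_bounds f
      refine ⟨j, hj, ?_, ?_, ?_⟩
      · simp only [Q]; omega
      · simp only [Q]; omega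
      · intro x hx
        rw [BG_spectrum]
        refine smear f (by omega) hf x ?_ ?_ <;> simp only [Q] at hx <;> omega
end
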